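/- Let Ω satisfy (H) and let a,b>0. Define (A,B,D) = ∫_{−π}^{π}(a²cos²φ+b²sin²φ)^{−1}·(cos²φ, sin²φ, cosφ·sinφ)·Ω̃_log(φ)dφ, and let u_{a,b}=(1/(πab))·χ_{B(0;a,b)}, the uniform probability density on the ellipse B(0;a,b). Then there exists a constant C∈ℝ such that for every x∈B(0;a,b), ∫_{ℝ²} ( −ln|x−y| + Ω(θ(x−y)) + A·(x₁−y₁)² + B·(x₂−y₂)² + 2D·(x₁−y₁)(x₂−y₂) )·u_{a,b}(y) dy = C. Moreover, if Ω̃_log(φ)≥0 for all φ, then this integral is ≥ C for every x∈ℝ², i.e. it attains its global minimum on B(0;a,b). -/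

import Mathlib

/-!
The kernel is a superposition of one-dimensional kernels, and for each of these the potential of
the ellipse is explicit.

Write `g = OmtLog Ω` and `v · e_φ = v.1 cos φ + v.2 sin φ`. Since `Ω` is smooth and `π`-periodic,
the principal value defining `g` is an absolutely convergent integral of symmetric second
differences (`OmtLog_eq`), a hypersingular convolution that multiplies the Fourier mode
`cos (2kφ + β)` by `k / π` (`SatisfiesH.coeff_OmtLog`); the multiplier is a Fejér kernel integral.
Convolution with `log |sin|` multiplies the same mode by `-π / k` (`coeff_logConv`), so it inverts
that operator up to sign and constants, and the normalisation `∫ g = 1` accounts for the radial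
part of the kernel. This gives, for `v ≠ 0` (`SatisfiesH.exists_kernel_rep`),
`-log |v| + Ω(θ(v)) = m - ∫ g(φ) log |v · e_φ| dφ`.
The coefficients `A, B, D` are exactly those for which the quadratic correction is
`∫ g(φ) (v · e_φ)² / r_φ² dφ`, where `r_φ² = a² cos² φ + b² sin² φ` (`quad_eq`).

The image of the uniform law on the ellipse under `y ↦ y · e_φ` is the semicircle law of radius
`r_φ` (`map_ellipse`). By Fubini (`integrable_dirKer`) the potential at `x` is therefore
`m + ∫ g(φ) (S((x · e_φ) / r_φ) - log r_φ) dφ` (`SatisfiesH.exists_potential_eq`), where `S` is the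
potential of the unit semicircle law for the kernel `t² - log |t|`. Now `S = 3/4 + log 2` on
`[-1, 1]` (`semiPot_of_abs_le`) and `S ≥ 3/4 + log 2` everywhere (`le_semiPot`). For `x` in the
ellipse, Cauchy–Schwarz puts `(x · e_φ) / r_φ` in `[-1, 1]`, which gives constancy; if `g ≥ 0`, the
pointwise lower bound on `S` gives minimality.
-/

open MeasureTheory Real Filter Set Topology
open scoped ENNReal

noncomputable section

namespace Aniso

/-- The Euclidean norm on `ℝ × ℝ`. -/
def nrm (x : ℝ × ℝ) : ℝ := Real.sqrt (x.1 ^ 2 + x.2 ^ 2)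

/-- The angle `θ(x) ∈ [-π, π)` of a nonzero point `x ∈ ℝ²`,
so that `x / |x| = (cos (ang x), sin (ang x))`. -/
def ang (x : ℝ × ℝ) : ℝ :=
  if Complex.arg ⟨x.1, x.2⟩ = π then -π else Complex.arg ⟨x.1, x.2⟩

/-- The unit vector `e_φ = (cos φ, sin φ)`. -/
def eVec (φ : ℝ) : ℝ × ℝ := (Real.cos φ, Real.sin φ)

/-- The constant `τ_s = (2π)^{-s} Γ(s) cos(sπ/2)`. -/
def tauC (s : ℝ) : ℝ := (2 * π) ^ (-s) * Real.Gamma s * Real.cos (s * π / 2)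

/-- The constant `c_s = π^{s-1} Γ((2-s)/2) / Γ(s/2)`. -/
def cC (s : ℝ) : ℝ := π ^ (s - 1) * Real.Gamma ((2 - s) / 2) / Real.Gamma (s / 2)

/-- Hypothesis (H): `Ω` is smooth, 2π-periodic, strictly positive and π-periodic. -/
def SatisfiesH (Ω : ℝ → ℝ) : Prop :=
  ContDiff ℝ (⊤ : ℕ∞) Ω ∧ (∀ θ, Ω (θ + 2 * π) = Ω θ) ∧ (∀ θ, 0 < Ω θ) ∧ ∀ θ, Ω (θ + π) = Ω θ

/-- Hypothesis (h): `ω` is smooth, 2π-periodic, nonnegative, not identically zero,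
π-periodic, and `ω(π/2) = 0`. -/
def Satisfiesh (ω : ℝ → ℝ) : Prop :=
  ContDiff ℝ (⊤ : ℕ∞) ω ∧ (∀ θ, ω (θ + 2 * π) = ω θ) ∧ (∀ θ, 0 ≤ ω θ) ∧ (∃ θ, ω θ ≠ 0) ∧
    (∀ θ, ω (θ + π) = ω θ) ∧ ω (π / 2) = 0

/-- The transformed angle function `Ω̃`. -/
def Omt (s : ℝ) (Ω : ℝ → ℝ) (φ : ℝ) : ℝ :=
  tauC (2 - s) * (∫ θ in (-π)..π, |Real.cos (φ - θ)| ^ (-2 + s) * (Ω θ - Ω (φ + π / 2)))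
    + cC s * Ω (φ + π / 2)

/-- The interaction potential `W(x) = |x|^{-s} Ω(θ(x)) + |x|²` as an `[0,∞]`-valued
kernel, with `W(0) = ∞`. -/
def Wkernel (s : ℝ) (Ω : ℝ → ℝ) (x : ℝ × ℝ) : ℝ≥0∞ :=
  if x = 0 then ⊤ else ENNReal.ofReal (nrm x ^ (-s) * Ω (ang x) + nrm x ^ 2)

/-- The interaction energy `E[ρ] = (1/2) ∬ W(x-y) dρ(y) dρ(x) ∈ [0,∞]`. -/
def energy (s : ℝ) (Ω : ℝ → ℝ) (ρ : Measure (ℝ × ℝ)) : ℝ≥0∞ :=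
  (1 / 2 : ℝ≥0∞) * ∫⁻ x, ∫⁻ y, Wkernel s Ω (x - y) ∂ρ ∂ρ

/-- The real-valued interaction potential (with junk value `0` at the origin,
which is Lebesgue negligible). -/
def Wr (s : ℝ) (Ω : ℝ → ℝ) (x : ℝ × ℝ) : ℝ := nrm x ^ (-s) * Ω (ang x) + nrm x ^ 2

/-- `ρ` minimizes the energy `E` among probability measures on `ℝ²`. -/
def IsMinimizer (E : Measure (ℝ × ℝ) → ℝ≥0∞) (ρ : Measure (ℝ × ℝ)) : Prop :=
  IsProbabilityMeasure ρ ∧ ∀ μ : Measure (ℝ × ℝ), IsProbabilityMeasure μ → E ρ ≤ E μ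

/-- `ρ` is the unique minimizer of `E` up to translation: it is a minimizer and every
minimizer is a translate of it. -/
def IsUniqueMinimizer (E : Measure (ℝ × ℝ) → ℝ≥0∞) (ρ : Measure (ℝ × ℝ)) : Prop :=
  IsMinimizer E ρ ∧ ∀ μ, IsMinimizer E μ → ∃ v : ℝ × ℝ, μ = Measure.map (fun x => x + v) ρ

def R2 (s : ℝ) : ℝ := (8 * Real.sin (s * π / 2) / (s ^ 2 * (2 + s) * π)) ^ (-(1 / (s + 2)))

def C2 (s : ℝ) : ℝ := 4 * Real.sin (s * π / 2) / (s ^ 2 * π ^ 2)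

/-- The density `ρ₂(x) = C₂ (R₂² - |x|²)₊^{s/2}`. -/
def rho2 (s : ℝ) (x : ℝ × ℝ) : ℝ := C2 s * (max (R2 s ^ 2 - nrm x ^ 2) 0) ^ (s / 2)

def rho2meas (s : ℝ) : Measure (ℝ × ℝ) := volume.withDensity fun x => ENNReal.ofReal (rho2 s x)

/-- Counterclockwise rotation of `ℝ²` by the angle `η`. -/
def Rot (η : ℝ) (x : ℝ × ℝ) : ℝ × ℝ :=
  (x.1 * Real.cos η - x.2 * Real.sin η, x.1 * Real.sin η + x.2 * Real.cos η)

/-- The measure `ρ_{a,b,η}`: the pushforward of `ρ₂(x) dx` under `x ↦ R_η (a x₁, b x₂)`. -/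
def rhoE (s a b η : ℝ) : Measure (ℝ × ℝ) :=
  Measure.map (fun x => Rot η (a * x.1, b * x.2)) (rho2meas s)

/-- The measure `ρ_{a,b} = ρ_{a,b,0}`. -/
def rhoAB (s a b : ℝ) : Measure (ℝ × ℝ) := rhoE s a b 0

/-- The Beta function. -/
def BetaR (x y : ℝ) : ℝ := Real.Gamma x * Real.Gamma y / Real.Gamma (x + y)

def C1 (s : ℝ) : ℝ := 2 * Real.cos (s * π / 2) / (s * (s + 1) * π)

def R1 (s : ℝ) : ℝ := (C1 s * BetaR (1 / 2) ((3 + s) / 2)) ^ (-(1 / (s + 2)))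

/-- The density `ρ₁(t) = C₁ (R₁² - t²)₊^{(1+s)/2}` on `ℝ`. -/
def rho1 (s t : ℝ) : ℝ := C1 s * (max (R1 s ^ 2 - t ^ 2) 0) ^ ((1 + s) / 2)

def rho1meas (s : ℝ) : Measure ℝ := volume.withDensity fun t => ENNReal.ofReal (rho1 s t)

/-- The measure `ρ_{1D}`: the pushforward of `ρ₁(t) dt` under `t ↦ (0, t)`. -/
def rho1D (s : ℝ) : Measure (ℝ × ℝ) := Measure.map (fun t : ℝ => ((0 : ℝ), t)) (rho1meas s)

/-- The support of a measure: points all of whose neighborhoods have positive measure. -/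
def msupport {α : Type*} [TopologicalSpace α] [MeasurableSpace α] (μ : Measure α) : Set α :=
  {x | ∀ U ∈ 𝓝 x, 0 < μ U}

def Acoef (s : ℝ) (Ω : ℝ → ℝ) (a b : ℝ) : ℝ :=
  tauC s * (R1 s / R2 s) ^ (2 + s) *
    ∫ φ in (-π)..π,
      (a ^ 2 * Real.cos φ ^ 2 + b ^ 2 * Real.sin φ ^ 2) ^ (-(2 + s) / 2) *
        Real.cos φ ^ 2 * Omt s Ω φ

def Bcoef (s : ℝ) (Ω : ℝ → ℝ) (a b : ℝ) : ℝ :=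
  tauC s * (R1 s / R2 s) ^ (2 + s) *
    ∫ φ in (-π)..π,
      (a ^ 2 * Real.cos φ ^ 2 + b ^ 2 * Real.sin φ ^ 2) ^ (-(2 + s) / 2) *
        Real.sin φ ^ 2 * Omt s Ω φ

def Dcoef (s : ℝ) (Ω : ℝ → ℝ) (a b : ℝ) : ℝ :=
  tauC s * (R1 s / R2 s) ^ (2 + s) *
    ∫ φ in (-π)..π,
      (a ^ 2 * Real.cos φ ^ 2 + b ^ 2 * Real.sin φ ^ 2) ^ (-(2 + s) / 2) *
        (Real.cos φ * Real.sin φ) * Omt s Ω φ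

def Mfun (s : ℝ) (Ω : ℝ → ℝ) (a b : ℝ) : ℝ :=
  tauC s * (R1 s / R2 s) ^ (2 + s) *
    ∫ φ in (-π)..π, (a ^ 2 * Real.cos φ ^ 2 + b ^ 2 * Real.sin φ ^ 2) ^ (-s / 2) * Omt s Ω φ

def calE (s : ℝ) (Ω : ℝ → ℝ) (a b : ℝ) : ℝ := Mfun s Ω a b + s / 2 * (a ^ 2 + b ^ 2)

/-- A measure has compact support. -/
def HasCompactSupportM (ρ : Measure (ℝ × ℝ)) : Prop :=
  ∃ K : Set (ℝ × ℝ), IsCompact K ∧ ρ Kᶜ = 0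

/-- The linear interpolation `(1-t) ρ₀ + t ρ₁`. -/
def mix (ρ₀ ρ₁ : Measure (ℝ × ℝ)) (t : ℝ) : Measure (ℝ × ℝ) :=
  ENNReal.ofReal (1 - t) • ρ₀ + ENNReal.ofReal t • ρ₁

/-- Linear interpolation convexity (LIC): for any two distinct compactly supported
probability measures of finite energy with the same center of mass, the energy is
strictly convex along their linear interpolation. -/
def LIC (s : ℝ) (Ω : ℝ → ℝ) : Prop :=
  ∀ ρ₀ ρ₁ : Measure (ℝ × ℝ), IsProbabilityMeasure ρ₀ → IsProbabilityMeasure ρ₁ →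
    HasCompactSupportM ρ₀ → HasCompactSupportM ρ₁ →
    energy s Ω ρ₀ < ⊤ → energy s Ω ρ₁ < ⊤ → ρ₀ ≠ ρ₁ →
    (∫ x, x ∂ρ₀) = (∫ x, x ∂ρ₁) →
    StrictConvexOn ℝ (Set.Icc (0 : ℝ) 1) fun t => (energy s Ω (mix ρ₀ ρ₁ t)).toReal

/-- The interaction energy of a bounded compactly supported signed density. -/
def energyR (s : ℝ) (Ω : ℝ → ℝ) (μ : ℝ × ℝ → ℝ) : ℝ :=
  (1 / 2) * ∫ x : ℝ × ℝ, (∫ y : ℝ × ℝ, Wr s Ω (x - y) * μ y) * μ x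

/-- The logarithmic potential `W_log(x) = -ln|x| + Ω(θ(x)) + |x|²` (real valued,
with junk value at the origin). -/
def Wlog (Ω : ℝ → ℝ) (x : ℝ × ℝ) : ℝ := -Real.log (nrm x) + Ω (ang x) + nrm x ^ 2

def WlogKernel (Ω : ℝ → ℝ) (x : ℝ × ℝ) : ℝ≥0∞ :=
  if x = 0 then ⊤ else ENNReal.ofReal (Wlog Ω x)

/-- The logarithmic interaction energy. -/
def energyLog (Ω : ℝ → ℝ) (ρ : Measure (ℝ × ℝ)) : ℝ≥0∞ :=
  (1 / 2 : ℝ≥0∞) * ∫⁻ x, ∫⁻ y, WlogKernel Ω (x - y) ∂ρ ∂ρ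

/-- The family `W_{(s)}(x) = |x|^{-s} (1/s + Ω(θ(x))) - 1/s + |x|²`. -/
def Wsfam (s : ℝ) (Ω : ℝ → ℝ) (x : ℝ × ℝ) : ℝ :=
  nrm x ^ (-s) * (1 / s + Ω (ang x)) - 1 / s + nrm x ^ 2

/-- The transformed angle function of `W_{(s)}`. -/
def Omts (s : ℝ) (Ω : ℝ → ℝ) (φ : ℝ) : ℝ :=
  tauC (2 - s) * (∫ θ in (-π)..π, |Real.cos (φ - θ)| ^ (-2 + s) * (Ω θ - Ω (φ + π / 2)))
    + cC s * (1 / s + Ω (φ + π / 2))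

/-- The truncated integral appearing in the principal value defining `Ω̃_log`. -/
def pvInt (Ω : ℝ → ℝ) (φ δ : ℝ) : ℝ :=
  ∫ θ in {θ : ℝ | θ ∈ Set.Icc (-π) π ∧ δ ≤ |Real.cos (φ - θ)|},
    |Real.cos (φ - θ)| ^ (-(2 : ℝ)) * (Ω θ - Ω (φ + π / 2))

def OmtLogFam (Ω : ℝ → ℝ) (φ δ : ℝ) : ℝ :=
  -((2 * π) ^ (-(2 : ℝ))) * pvInt Ω φ δ + (2 * π)⁻¹

/-- The transformed angle function `Ω̃_log`, defined as the principal value limit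
(via `limUnder`, which returns the limit whenever it exists). -/
def OmtLog (Ω : ℝ → ℝ) (φ : ℝ) : ℝ := limUnder (𝓝[>] (0 : ℝ)) (OmtLogFam Ω φ)

/-- The closed elliptical region `B(0; a, b)`. -/
def ellipseSet (a b : ℝ) : Set (ℝ × ℝ) := {x | x.1 ^ 2 / a ^ 2 + x.2 ^ 2 / b ^ 2 ≤ 1}

def ALog (Ω : ℝ → ℝ) (a b : ℝ) : ℝ :=
  ∫ φ in (-π)..π,
    (a ^ 2 * Real.cos φ ^ 2 + b ^ 2 * Real.sin φ ^ 2)⁻¹ * Real.cos φ ^ 2 * OmtLog Ω φ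

def BLog (Ω : ℝ → ℝ) (a b : ℝ) : ℝ :=
  ∫ φ in (-π)..π,
    (a ^ 2 * Real.cos φ ^ 2 + b ^ 2 * Real.sin φ ^ 2)⁻¹ * Real.sin φ ^ 2 * OmtLog Ω φ

def DLog (Ω : ℝ → ℝ) (a b : ℝ) : ℝ :=
  ∫ φ in (-π)..π,
    (a ^ 2 * Real.cos φ ^ 2 + b ^ 2 * Real.sin φ ^ 2)⁻¹ *
      (Real.cos φ * Real.sin φ) * OmtLog Ω φ

/-- The uniform probability measure on the rotated ellipse `B(0; a, b, η)`. -/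
def unifEllipse (a b η : ℝ) : Measure (ℝ × ℝ) :=
  volume.withDensity ((Rot η '' ellipseSet a b).indicator fun _ => ENNReal.ofReal ((π * a * b)⁻¹))

/-- The pushforward of the density `(2/(πb²)) (b² - t²)₊^{1/2} dt` under `t ↦ R_η (0, t)`. -/
def semicirc (b η : ℝ) : Measure (ℝ × ℝ) :=
  Measure.map (fun t : ℝ => Rot η (0, t))
    (volume.withDensity fun t =>
      ENNReal.ofReal (2 / (π * b ^ 2) * (max (b ^ 2 - t ^ 2) 0) ^ ((1 : ℝ) / 2)))

/-- The vertical semicircle measure `ρ_{1D}` for the logarithmic case. -/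
def rho1Dlog : Measure (ℝ × ℝ) :=
  Measure.map (fun t : ℝ => ((0 : ℝ), t))
    (volume.withDensity fun t => ENNReal.ofReal (2 / π * (max (1 - t ^ 2) 0) ^ ((1 : ℝ) / 2)))

/-- The measure `ψ(t) dt` placed on the vertical axis. -/
def rhoPsi (ψ : ℝ → ℝ) : Measure (ℝ × ℝ) :=
  Measure.map (fun t : ℝ => ((0 : ℝ), t)) (volume.withDensity fun t => ENNReal.ofReal (ψ t))

/-! ### Trigonometric kernels and the Fourier coefficients of `log sin` -/

/-- The Dirichlet kernel `sin ((2k+1)t) / sin t`, written as a trigonometric sum. -/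
def dirK (k : ℕ) (t : ℝ) : ℝ := 1 + ∑ j ∈ Finset.range k, 2 * Real.cos (2 * (j + 1 : ℕ) * t)

/-- The (unnormalised) Fejér kernel `(sin (kt) / sin t)²`, as a sum of Dirichlet kernels. -/
def fejK (k : ℕ) (t : ℝ) : ℝ := ∑ j ∈ Finset.range k, dirK j t

/-- The quotient `sin (2ks) / sin s`, written as a trigonometric sum. -/
def evenK (k : ℕ) (s : ℝ) : ℝ := ∑ j ∈ Finset.range k, 2 * Real.cos ((2 * j + 1) * s)

lemma continuous_dirK (k : ℕ) : Continuous (dirK k) := by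
  unfold dirK; fun_prop

lemma continuous_fejK (k : ℕ) : Continuous (fejK k) :=
  continuous_finsetSum _ fun j _ => continuous_dirK j

lemma continuous_evenK (k : ℕ) : Continuous (evenK k) := by
  unfold evenK; fun_prop

lemma sin_mul_dirK (k : ℕ) (t : ℝ) : Real.sin t * dirK k t = Real.sin ((2 * k + 1) * t) := by
  induction k with
  | zero => simp [dirK]
  | succ k ih =>
    have h : dirK (k + 1) t = dirK k t + 2 * Real.cos (2 * (k + 1 : ℕ) * t) := by
      simp [dirK, Finset.sum_range_succ, add_assoc]
    rw [h, mul_add, ih]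
    push_cast
    have e1 : (2 * ((k : ℝ) + 1) + 1) * t = 2 * ((k : ℝ) + 1) * t + t := by ring
    have e2 : (2 * (k : ℝ) + 1) * t = 2 * ((k : ℝ) + 1) * t - t := by ring
    rw [e1, e2, Real.sin_add, Real.sin_sub]
    ring

lemma sin_sq_mul_fejK (k : ℕ) (t : ℝ) : Real.sin t ^ 2 * fejK k t = Real.sin (k * t) ^ 2 := by
  induction k with
  | zero => simp [fejK]
  | succ k ih =>
    have h : fejK (k + 1) t = fejK k t + dirK k t := by simp [fejK, Finset.sum_range_succ]
    have h2 : Real.sin t ^ 2 * dirK k t = Real.sin t * Real.sin ((2 * k + 1) * t) := by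
      rw [← sin_mul_dirK]; ring
    rw [h, mul_add, ih, h2]
    push_cast
    have e1 : (2 * (k : ℝ) + 1) * t = k * t + (k + 1) * t := by ring
    have e2 : Real.sin t = Real.sin ((k + 1) * t - k * t) := by congr 1; ring
    rw [e1, e2, Real.sin_add, Real.sin_sub]
    have c1 := Real.sin_sq_add_cos_sq (k * t)
    have c2 := Real.sin_sq_add_cos_sq ((k + 1) * t)
    set S := Real.sin (k * t)
    set C := Real.cos (k * t)
    set S' := Real.sin ((k + 1) * t)
    set C' := Real.cos ((k + 1) * t)
    linear_combination S' ^ 2 * c1 - S ^ 2 * c2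

lemma sin_mul_evenK (k : ℕ) (s : ℝ) : Real.sin s * evenK k s = Real.sin (2 * k * s) := by
  induction k with
  | zero => simp [evenK]
  | succ k ih =>
    have h : evenK (k + 1) s = evenK k s + 2 * Real.cos ((2 * k + 1) * s) := by
      simp [evenK, Finset.sum_range_succ]
    rw [h, mul_add, ih]
    push_cast
    have e1 : (2 * ((k : ℝ) + 1)) * s = (2 * k + 1) * s + s := by ring
    have e2 : (2 * (k : ℝ)) * s = (2 * k + 1) * s - s := by ring
    rw [e1, e2, Real.sin_add, Real.sin_sub]
    ring

/-- Nonconstant trigonometric monomials of period `π` integrate to zero over a period. -/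
lemma integral_cos_two_mul (k : ℕ) (hk : k ≠ 0) (c β : ℝ) :
    ∫ t in c..(c + π), Real.cos (2 * k * t + β) = 0 := by
  have hk' : (2 * (k : ℝ)) ≠ 0 := by positivity
  rw [intervalIntegral.integral_comp_mul_add (fun x => Real.cos x) hk', integral_cos]
  have : 2 * (k : ℝ) * (c + π) + β = 2 * (k : ℝ) * c + β + k * (2 * π) := by ring
  rw [this, Real.sin_add_nat_mul_two_pi]
  simp

lemma integral_dirK (k : ℕ) (c : ℝ) : ∫ t in c..(c + π), dirK k t = π := by
  unfold dirK
  rw [intervalIntegral.integral_add (by simp) (Continuous.intervalIntegrable (by fun_prop) _ _),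
    intervalIntegral.integral_finsetSum
      (fun j _ => Continuous.intervalIntegrable (by fun_prop) _ _)]
  rw [Finset.sum_eq_zero]
  · simp
  · intro j _
    have := integral_cos_two_mul (j + 1) (by simp) c 0
    simp only [add_zero] at this
    rw [intervalIntegral.integral_const_mul, this, mul_zero]

lemma integral_fejK (k : ℕ) (c : ℝ) : ∫ t in c..(c + π), fejK k t = k * π := by
  unfold fejK
  rw [intervalIntegral.integral_finsetSum
      (fun j _ => (continuous_dirK j).intervalIntegrable _ _)]
  simp [integral_dirK]

lemma ae_sin_ne_zero : ∀ᵐ t : ℝ, Real.sin t ≠ 0 := by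
  have h : {t : ℝ | Real.sin t = 0} = Set.range fun n : ℤ => (n : ℝ) * π := by
    ext t; simp [Real.sin_eq_zero_iff]
  have h2 : ({t : ℝ | Real.sin t = 0}).Countable := by rw [h]; exact Set.countable_range _
  have := h2.ae_notMem volume
  filter_upwards [this] with t ht using ht

/-- `∫ (sin kt / sin t)² = kπ` over a period. -/
lemma integral_sin_sq_div (k : ℕ) :
    ∫ t in (-(π / 2))..(π / 2), Real.sin (k * t) ^ 2 / Real.sin t ^ 2 = k * π := by
  have h := integral_fejK k (-(π / 2))
  rw [show -(π / 2) + π = π / 2 by ring] at h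
  rw [← h]
  apply intervalIntegral.integral_congr_ae
  filter_upwards [ae_sin_ne_zero] with t ht _
  rw [← sin_sq_mul_fejK]
  field_simp

lemma integral_cos_mul_evenK (k : ℕ) (hk : k ≠ 0) :
    ∫ s in 0..π, Real.cos s * evenK k s = π := by
  have h : ∀ s, Real.cos s * evenK k s = ∑ j ∈ Finset.range k,
      (Real.cos (2 * (j + 1 : ℕ) * s) + Real.cos (2 * (j : ℕ) * s)) := by
    intro s
    unfold evenK
    rw [Finset.mul_sum]
    refine Finset.sum_congr rfl fun j _ => ?_
    have e1 : 2 * ((j + 1 : ℕ) : ℝ) * s = (2 * j + 1) * s + s := by push_cast; ring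
    have e2 : 2 * ((j : ℕ) : ℝ) * s = (2 * j + 1) * s - s := by ring
    rw [e1, e2, Real.cos_add, Real.cos_sub]
    ring
  simp_rw [h]
  rw [intervalIntegral.integral_finsetSum
      (fun j _ => Continuous.intervalIntegrable (by fun_prop) _ _)]
  have hI : ∀ j : ℕ, ∫ s in 0..π, Real.cos (2 * (j : ℕ) * s) = if j = 0 then π else 0 := by
    intro j
    split_ifs with hj
    · simp [hj]
    · simpa using integral_cos_two_mul j hj 0 0
  obtain ⟨m, rfl⟩ := Nat.exists_eq_succ_of_ne_zero hk
  rw [Finset.sum_congr rfl (fun j _ => intervalIntegral.integral_add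
    (Continuous.intervalIntegrable (by fun_prop) _ _)
    (Continuous.intervalIntegrable (by fun_prop) _ _))]
  simp_rw [hI]
  simp

lemma intervalIntegrable_mul_log_sin {f : ℝ → ℝ} (hf : Continuous f) (c d : ℝ) :
    IntervalIntegrable (fun s => f s * Real.log (Real.sin s)) volume c d :=
  (intervalIntegrable_log_sin (a := c) (b := d)).continuousOn_mul hf.continuousOn

/-- Fourier cosine coefficients of `log sin`, by integrating by parts. -/
lemma integral_cos_mul_log_sin (k : ℕ) (hk : k ≠ 0) :
    ∫ s in 0..π, Real.cos (2 * k * s) * Real.log (Real.sin s) = -(π / (2 * k)) := by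
  have hk' : (2 * (k : ℝ)) ≠ 0 := by positivity
  -- the boundary singularities of the primitive are removable since `sin s` divides `sin (2ks)`
  have hF : Continuous fun s => Real.sin (2 * k * s) * Real.log (Real.sin s) := by
    have : (fun s => Real.sin (2 * k * s) * Real.log (Real.sin s)) =
        fun s => evenK k s * (Real.sin s * Real.log (Real.sin s)) := by
      ext s; rw [← sin_mul_evenK]; ring
    rw [this]
    exact (continuous_evenK k).mul (Real.continuous_mul_log.comp Real.continuous_sin)
  have key := intervalIntegral.integral_eq_sub_of_hasDerivAt_of_le
    (f := fun s => Real.sin (2 * k * s) * Real.log (Real.sin s))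
    (f' := fun s => 2 * k * (Real.cos (2 * k * s) * Real.log (Real.sin s)) +
      Real.cos s * evenK k s) Real.pi_pos.le hF.continuousOn ?_ ?_
  · rw [intervalIntegral.integral_add, intervalIntegral.integral_const_mul,
      integral_cos_mul_evenK k hk] at key
    · simp at key
      field_simp
      linarith
    · exact (intervalIntegrable_mul_log_sin (by fun_prop) _ _).const_mul _
    · exact (Real.continuous_cos.mul (continuous_evenK k)).intervalIntegrable _ _
  · intro s hs
    have hs' : Real.sin s ≠ 0 := (Real.sin_pos_of_mem_Ioo hs).ne'
    have h1 : HasDerivAt (fun s => Real.sin (2 * k * s)) (Real.cos (2 * k * s) * (2 * k)) s := by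
      have := ((hasDerivAt_id s).const_mul (2 * (k : ℝ))).sin
      simpa using this
    have h2 := (Real.hasDerivAt_sin s).log hs'
    refine (h1.mul h2).congr_deriv ?_
    rw [← sin_mul_evenK]
    field_simp
  · exact ((intervalIntegrable_mul_log_sin (by fun_prop) _ _).const_mul _).add
      ((Real.continuous_cos.mul (continuous_evenK k)).intervalIntegrable _ _)

/-- The sine coefficients of `log sin` vanish, by the reflection `s ↦ π - s`. -/
lemma integral_sin_mul_log_sin (k : ℕ) :
    ∫ s in 0..π, Real.sin (2 * k * s) * Real.log (Real.sin s) = 0 := by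
  have h := intervalIntegral.integral_comp_sub_left (a := 0) (b := π)
    (fun s => Real.sin (2 * k * s) * Real.log (Real.sin s)) π
  simp only [sub_self, sub_zero, Real.sin_pi_sub] at h
  have e : ∀ s : ℝ, Real.sin (2 * k * (π - s)) = - Real.sin (2 * k * s) := by
    intro s
    have : 2 * (k : ℝ) * (π - s) = k * (2 * π) - 2 * k * s := by ring
    rw [this, Real.sin_nat_mul_two_pi_sub]
  simp_rw [e, neg_mul, intervalIntegral.integral_neg] at h
  linarith

/-! ### Fourier coefficients of periodic functions -/

/-- A continuous `π`-periodic function all of whose nonzero Fourier modes vanish is constant. -/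
lemma const_of_coeff {f : ℝ → ℝ} (hf : Continuous f) (hp : Function.Periodic f π)
    (h : ∀ k : ℕ, k ≠ 0 → ∀ β, ∫ x in 0..π, f x * Real.cos (2 * k * x + β) = 0) :
    ∃ m, ∀ x, f x = m := by
  have hπ := Real.pi_pos
  have : Fact (0 < π) := ⟨hπ⟩
  set m : ℝ := (∫ x in 0..π, f x) / π with hm
  refine ⟨m, ?_⟩
  set u : ℝ → ℝ := fun x => f x - m with hu
  have huc : Continuous u := hf.sub continuous_const
  have hcoef : ∀ k : ℕ, ∀ β, ∫ x in 0..π, u x * Real.cos (2 * k * x + β) = 0 := by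
    intro k β
    simp only [hu, sub_mul]
    rw [intervalIntegral.integral_sub (Continuous.intervalIntegrable (by fun_prop) _ _)
      (Continuous.intervalIntegrable (by fun_prop) _ _), intervalIntegral.integral_const_mul]
    by_cases hk : k = 0
    · subst hk
      simp only [CharP.cast_eq_zero, mul_zero, zero_mul, zero_add,
        intervalIntegral.integral_mul_const, intervalIntegral.integral_const, smul_eq_mul, hm]
      field_simp
      ring
    · have := integral_cos_two_mul k hk 0 β
      rw [zero_add] at this
      rw [h k hk, this]
      simp
  -- the complex Fourier coefficients on the circle of length `π` all vanish
  have hup : Function.Periodic (fun x => (u x : ℂ)) π := by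
    intro x; simp [hu, hp x]
  let F : C(AddCircle π, ℂ) := ⟨hup.lift, by
    exact continuous_coinduced_dom.mpr (Complex.continuous_ofReal.comp huc)⟩
  have hF : ∀ x : ℝ, F (x : AddCircle π) = (u x : ℂ) := fun x => rfl
  have hc : ∀ n : ℤ, fourierCoeff F n = 0 := by
    intro n
    rw [fourierCoeff_eq_intervalIntegral F n 0]
    have e : ∀ x : ℝ, (fourier (-n) (x : AddCircle π)) • F x =
        ((u x * Real.cos (-(2 * n * x)) : ℝ) : ℂ) +
        ((u x * Real.sin (-(2 * n * x)) : ℝ) : ℂ) * Complex.I := by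
      intro x
      rw [fourier_coe_apply, hF, smul_eq_mul]
      have : 2 * (π : ℂ) * Complex.I * ((-n : ℤ) : ℂ) * x / π
          = ((-(2 * n * x) : ℝ) : ℂ) * Complex.I := by
        have : (π : ℂ) ≠ 0 := by exact_mod_cast hπ.ne'
        push_cast
        field_simp
      rw [this, Complex.exp_mul_I, ← Complex.ofReal_cos, ← Complex.ofReal_sin]
      push_cast
      ring
    simp_rw [e]
    rw [intervalIntegral.integral_add (Continuous.intervalIntegrable (by fun_prop) _ _)
      (Continuous.intervalIntegrable (by fun_prop) _ _), intervalIntegral.integral_mul_const,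
      intervalIntegral.integral_ofReal, intervalIntegral.integral_ofReal]
    have hcos : ∫ x in 0..π, u x * Real.cos (-(2 * n * x)) = 0 := by
      obtain ⟨k, rfl | rfl⟩ := n.eq_nat_or_neg
      all_goals
        refine Eq.trans ?_ (hcoef k 0)
        congr 1
        ext x
        simp
    have hsin : ∫ x in 0..π, u x * Real.sin (-(2 * n * x)) = 0 := by
      obtain ⟨k, rfl | rfl⟩ := n.eq_nat_or_neg
      · refine Eq.trans ?_ (hcoef k (π / 2))
        congr 1
        ext x
        rw [Real.cos_add_pi_div_two]; simp
      · rw [← neg_eq_zero, ← intervalIntegral.integral_neg]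
        refine Eq.trans ?_ (hcoef k (π / 2))
        congr 1
        ext x
        rw [Real.cos_add_pi_div_two]; simp
    rw [zero_add, hcos, hsin]
    simp
  have hs : Summable (fourierCoeff F) := by
    rw [show fourierCoeff F = fun _ => 0 from funext hc]
    exact summable_zero
  intro x
  have hx := has_pointwise_sum_fourier_series_of_summable hs (x : AddCircle π)
  simp only [hc, zero_smul] at hx
  have h0 := hx.unique hasSum_zero
  rw [hF] at h0
  have : u x = 0 := by exact_mod_cast h0
  simp only [hu] at this
  linarith

/-- Translating a `π`-periodic function only shifts the phase of its Fourier coefficients. -/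
lemma coeff_shift {f : ℝ → ℝ} (hp : Function.Periodic f π)
    (k : ℕ) (β s : ℝ) :
    ∫ x in 0..π, f (x + s) * Real.cos (2 * k * x + β) =
      ∫ x in 0..π, f x * Real.cos (2 * k * x + (β - 2 * k * s)) := by
  have h1 := intervalIntegral.integral_comp_add_right (a := 0) (b := π)
    (fun x => f x * Real.cos (2 * k * x + (β - 2 * k * s))) s
  have hper : Function.Periodic (fun x => f x * Real.cos (2 * k * x + (β - 2 * k * s))) π := by
    intro x
    have : 2 * (k : ℝ) * (x + π) + (β - 2 * k * s)
        = 2 * k * x + (β - 2 * k * s) + k * (2 * π) := by ring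
    simp only [hp x, this, Real.cos_add_nat_mul_two_pi]
  have h2 := hper.intervalIntegral_add_eq s 0
  rw [zero_add] at h1 h2
  rw [add_comm π s, h2] at h1
  rw [← h1]
  congr 1
  ext x
  congr 2
  ring

/-- Fourier coefficients of the sum of two opposite translates. -/
lemma coeff_sym {f : ℝ → ℝ} (hf : Continuous f) (hp : Function.Periodic f π)
    (k : ℕ) (β s : ℝ) :
    ∫ x in 0..π, (f (x + s) + f (x - s)) * Real.cos (2 * k * x + β) =
      2 * Real.cos (2 * k * s) * ∫ x in 0..π, f x * Real.cos (2 * k * x + β) := by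
  have h1 := coeff_shift hp k β s
  have h2 := coeff_shift hp k β (-s)
  simp only [add_mul]
  rw [intervalIntegral.integral_add (Continuous.intervalIntegrable (by fun_prop) _ _)
      (Continuous.intervalIntegrable (by fun_prop) _ _)]
  simp only [← sub_eq_add_neg] at h2
  rw [h1, h2, ← intervalIntegral.integral_add (Continuous.intervalIntegrable (by fun_prop) _ _)
      (Continuous.intervalIntegrable (by fun_prop) _ _), ← intervalIntegral.integral_const_mul]
  congr 1
  ext x
  have e1 : 2 * (k : ℝ) * x + (β - 2 * k * s) = (2 * k * x + β) - 2 * k * s := by ring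
  have e2 : 2 * (k : ℝ) * x + (β - 2 * k * (-s)) = (2 * k * x + β) + 2 * k * s := by ring
  rw [e1, e2]
  generalize 2 * (k : ℝ) * x + β = y
  rw [Real.cos_sub, Real.cos_add]
  ring

/-! ### The hypersingular integral operator -/

/-- The weighted second difference `(ψ(φ+t) + ψ(φ-t) - 2ψ(φ)) / sin² t`. -/
def secD (ψ : ℝ → ℝ) (φ t : ℝ) : ℝ := (ψ (φ + t) + ψ (φ - t) - 2 * ψ φ) / Real.sin t ^ 2

/-- The hypersingular integral `∫ (ψ(φ+t) + ψ(φ-t) - 2ψ(φ)) / sin² t dt` over a period, in the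
symmetrised form in which it converges absolutely. -/
def hyp (ψ : ℝ → ℝ) (φ : ℝ) : ℝ := ∫ t in (-(π / 2))..(π / 2), secD ψ φ t

lemma periodic_deriv {f : ℝ → ℝ} {c : ℝ} (hp : Function.Periodic f c) :
    Function.Periodic (deriv f) c := by
  intro x
  rw [← deriv_comp_add_const]
  congr 1
  ext y
  exact hp y

/-- Second differences are quadratically small: the mean value inequality is applied to the
derivative of `ψ` and
then to `s ↦ ψ(φ+s) + ψ(φ-s) - 2ψ(φ)`. -/
lemma second_diff_bound {ψ : ℝ → ℝ} (hψ : ContDiff ℝ (⊤ : ℕ∞) ψ) (hp : Function.Periodic ψ π) :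
    ∃ M, 0 ≤ M ∧ ∀ φ t, |ψ (φ + t) + ψ (φ - t) - 2 * ψ φ| ≤ M * t ^ 2 := by
  have h1 : ContDiff ℝ (⊤ : ℕ∞) (deriv ψ) :=
    (contDiff_infty_iff_deriv.1 hψ).2
  have h2 : ContDiff ℝ (⊤ : ℕ∞) (deriv (deriv ψ)) :=
    (contDiff_infty_iff_deriv.1 h1).2
  have d0 : Differentiable ℝ ψ := (contDiff_infty_iff_deriv.1 hψ).1
  have d1 : Differentiable ℝ (deriv ψ) := (contDiff_infty_iff_deriv.1 h1).1
  have hb := (periodic_deriv (periodic_deriv hp)).isBounded_of_continuous Real.pi_pos.ne'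
    h2.continuous
  obtain ⟨M, hM⟩ := hb.exists_norm_le
  have hM' : ∀ x, ‖deriv (deriv ψ) x‖ ≤ M := fun x => hM _ (Set.mem_range_self x)
  have hM0 : 0 ≤ M := (norm_nonneg _).trans (hM' 0)
  have hlip : ∀ x y, ‖deriv ψ y - deriv ψ x‖ ≤ M * ‖y - x‖ := fun x y =>
    convex_univ.norm_image_sub_le_of_norm_deriv_le (fun x _ => d1 x) (fun x _ => hM' x)
      (mem_univ x) (mem_univ y)
  refine ⟨2 * M, by positivity, fun φ t => ?_⟩
  have hd : ∀ s, HasDerivAt (fun s => ψ (φ + s) + ψ (φ - s) - 2 * ψ φ)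
      (deriv ψ (φ + s) - deriv ψ (φ - s)) s := by
    intro s
    have a1 := (d0 (φ + s)).hasDerivAt.comp_const_add φ s
    have a2 := (d0 (φ - s)).hasDerivAt.comp_const_sub φ s
    exact ((a1.add a2).sub_const (2 * ψ φ)).congr_deriv (by ring)
  have key := (convex_uIcc (0 : ℝ) t).norm_image_sub_le_of_norm_hasDerivWithin_le
    (f := fun s => ψ (φ + s) + ψ (φ - s) - 2 * ψ φ) (C := 2 * M * |t|)
    (fun s _ => (hd s).hasDerivWithinAt) (fun s hs => ?_)
    (left_mem_uIcc) (right_mem_uIcc)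
  · simp only [Real.norm_eq_abs, add_zero, sub_zero] at key
    rw [show ψ φ + ψ φ - 2 * ψ φ = 0 by ring, sub_zero] at key
    rw [← sq_abs t]
    linarith
  · refine (hlip _ _).trans ?_
    have hst : |s| ≤ |t| := by
      have := abs_sub_left_of_mem_uIcc hs
      simpa using this
    have : ‖φ + s - (φ - s)‖ = 2 * |s| := by
      rw [show φ + s - (φ - s) = 2 * s by ring, Real.norm_eq_abs, abs_mul]; norm_num
    rw [this]
    nlinarith

lemma secD_bound {ψ : ℝ → ℝ} (hψ : ContDiff ℝ (⊤ : ℕ∞) ψ) (hp : Function.Periodic ψ π) :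
    ∃ M, 0 ≤ M ∧ ∀ φ t, |t| ≤ π / 2 → |secD ψ φ t| ≤ M := by
  obtain ⟨M, hM0, hM⟩ := second_diff_bound hψ hp
  refine ⟨M * (π / 2) ^ 2, by positivity, fun φ t ht => ?_⟩
  unfold secD
  have hπ := Real.pi_pos
  have hs := Real.mul_abs_le_abs_sin ht
  by_cases h0 : Real.sin t = 0
  · rw [h0]; simp; positivity
  rw [abs_div, abs_of_nonneg (sq_nonneg (Real.sin t)), div_le_iff₀ (by positivity)]
  refine (hM φ t).trans ?_
  have h3 : |t| ≤ π / 2 * |Real.sin t| := by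
    have : |t| = π / 2 * (2 / π * |t|) := by field_simp
    rw [this]; gcongr
  calc M * t ^ 2 = M * |t| ^ 2 := by rw [sq_abs]
    _ ≤ M * (π / 2 * |Real.sin t|) ^ 2 := by gcongr
    _ = _ := by rw [mul_pow, sq_abs]; ring

lemma abs_le_of_mem_uIoc {t : ℝ} (ht : t ∈ Set.uIoc (-(π / 2)) (π / 2)) : |t| ≤ π / 2 := by
  rw [uIoc_of_le (by linarith [Real.pi_pos])] at ht
  exact abs_le.2 ⟨ht.1.le, ht.2⟩

lemma measurable_secD {ψ : ℝ → ℝ} (hψ : Continuous ψ) :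
    Measurable (Function.uncurry (secD ψ)) := by
  unfold secD Function.uncurry
  fun_prop

lemma continuous_hyp {ψ : ℝ → ℝ} (hψ : ContDiff ℝ (⊤ : ℕ∞) ψ) (hp : Function.Periodic ψ π) :
    Continuous (hyp ψ) := by
  obtain ⟨M, hM0, hM⟩ := secD_bound hψ hp
  have hc := hψ.continuous
  refine intervalIntegral.continuous_of_dominated_interval (bound := fun _ => M) ?_ ?_ ?_ ?_
  · intro φ
    exact ((measurable_secD hc).comp measurable_prodMk_left).aestronglyMeasurable
  · intro φ
    exact Eventually.of_forall fun t ht => hM φ t (abs_le_of_mem_uIoc ht)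
  · simp
  · refine Eventually.of_forall fun t _ => ?_
    unfold secD
    fun_prop

lemma periodic_hyp {ψ : ℝ → ℝ} (hp : Function.Periodic ψ π) : Function.Periodic (hyp ψ) π := by
  intro φ
  unfold hyp secD
  congr 1
  ext t
  rw [show φ + π + t = φ + t + π by ring, show φ + π - t = φ - t + π by ring, hp, hp, hp]

/-- The hypersingular operator acts on the `k`-th Fourier mode as multiplication by `-4πk`. -/
lemma coeff_hyp {ψ : ℝ → ℝ} (hψ : ContDiff ℝ (⊤ : ℕ∞) ψ) (hp : Function.Periodic ψ π)
    (k : ℕ) (β : ℝ) :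
    ∫ x in 0..π, hyp ψ x * Real.cos (2 * k * x + β) =
      -(4 * π * k) * ∫ x in 0..π, ψ x * Real.cos (2 * k * x + β) := by
  obtain ⟨M, hM0, hM⟩ := secD_bound hψ hp
  have hc := hψ.continuous
  have hπ := Real.pi_pos
  unfold hyp
  simp_rw [← intervalIntegral.integral_mul_const]
  rw [intervalIntegral_intervalIntegral_swap]
  · have e : ∀ t, ∫ x in 0..π, secD ψ x t * Real.cos (2 * k * x + β) =
        (Real.sin (k * t) ^ 2 / Real.sin t ^ 2) *
          (-4 * ∫ x in 0..π, ψ x * Real.cos (2 * k * x + β)) := by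
      intro t
      have h1 := coeff_sym hc hp k β t
      have h2 : ∀ x, secD ψ x t * Real.cos (2 * k * x + β) = (Real.sin t ^ 2)⁻¹ *
          ((ψ (x + t) + ψ (x - t)) * Real.cos (2 * k * x + β) -
            2 * (ψ x * Real.cos (2 * k * x + β))) := by
        intro x; unfold secD; ring
      simp_rw [h2]
      rw [intervalIntegral.integral_const_mul, intervalIntegral.integral_sub
        (Continuous.intervalIntegrable (by fun_prop) _ _)
        (Continuous.intervalIntegrable (by fun_prop) _ _), h1,
        intervalIntegral.integral_const_mul]
      have h3 : Real.cos (2 * k * t) = 1 - 2 * Real.sin (k * t) ^ 2 := by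
        rw [mul_assoc, Real.cos_two_mul, ← Real.sin_sq_add_cos_sq (k * t)]; ring
      rw [h3]
      ring
    simp_rw [e]
    rw [intervalIntegral.integral_mul_const, integral_sin_sq_div]
    ring
  · refine Measure.integrableOn_of_bounded (M := M) ?_ ?_ ?_
    · rw [Measure.volume_eq_prod, Measure.prod_prod]
      simp [uIoc_of_le, hπ.le, ENNReal.mul_eq_top]
    · have := measurable_secD hc
      have h4 : Measurable fun p : ℝ × ℝ => Function.uncurry (secD ψ) p *
          Real.cos (2 * k * p.1 + β) := by fun_prop
      exact h4.aestronglyMeasurable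
    · refine (ae_restrict_iff' (measurableSet_uIoc.prod measurableSet_uIoc)).2
        (Eventually.of_forall fun p hp => ?_)
      have := hM p.1 p.2 (abs_le_of_mem_uIoc hp.2)
      simp only [Function.uncurry, norm_mul, Real.norm_eq_abs]
      calc _ ≤ M * 1 := by gcongr; exact Real.abs_cos_le_one _
        _ = M := mul_one M

/-! ### The principal value -/

lemma rpow_neg_two_abs (x : ℝ) : |x| ^ (-(2 : ℝ)) = (x ^ 2)⁻¹ := by
  rw [Real.rpow_neg (abs_nonneg x), Real.rpow_two, sq_abs]

/-- The integral of a `π`-periodic function over `[-π, π]` is twice that over any period. -/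
lemma integral_two_periods {q : ℝ → ℝ} (hq : Function.Periodic q π)
    (hi : ∀ c d, IntervalIntegrable q volume c d) (c : ℝ) :
    ∫ x in (-π)..π, q x = 2 * ∫ x in c..(c + π), q x := by
  rw [← intervalIntegral.integral_add_adjacent_intervals (hi (-π) 0) (hi 0 π)]
  have h1 := hq.intervalIntegral_add_eq (-π) c
  have h2 := hq.intervalIntegral_add_eq 0 c
  rw [neg_add_cancel] at h1
  rw [zero_add] at h2
  rw [h1, h2]; ring

/-- Truncations of the principal value, rewritten with symmetric second differences. -/
lemma pvInt_eq {Ω : ℝ → ℝ} (hc : Continuous Ω) (hp : Function.Periodic Ω π) (φ : ℝ) {δ : ℝ}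
    (hδ : 0 < δ) :
    pvInt Ω φ δ = ∫ t in (-(π / 2))..(π / 2),
      {t : ℝ | δ ≤ |Real.sin t|}.indicator (secD (fun x => Ω (x + π / 2)) φ) t := by
  have hπ := Real.pi_pos
  set ψ : ℝ → ℝ := fun x => Ω (x + π / 2) with hψ
  set q : ℝ → ℝ := {θ : ℝ | δ ≤ |Real.cos (φ - θ)|}.indicator
    (fun θ => |Real.cos (φ - θ)| ^ (-(2 : ℝ)) * (Ω θ - Ω (φ + π / 2))) with hq
  have hmeas : MeasurableSet {θ : ℝ | δ ≤ |Real.cos (φ - θ)|} :=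
    measurableSet_le (by fun_prop) (by fun_prop)
  have h1 : pvInt Ω φ δ = ∫ θ in (-π)..π, q θ := by
    rw [intervalIntegral.integral_of_le (by linarith), ← integral_Icc_eq_integral_Ioc, hq,
      setIntegral_indicator hmeas]
    rfl
  have hqp : Function.Periodic q π := by
    intro θ
    have e : Real.cos (φ - (θ + π)) = - Real.cos (φ - θ) := by
      rw [← Real.cos_sub_pi]; congr 1; ring
    simp only [hq, Set.indicator_apply, Set.mem_ofPred_eq, e, abs_neg, hp θ]
  obtain ⟨B, hB⟩ := (hp.isBounded_of_continuous hπ.ne' hc).exists_norm_le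
  have hB' : ∀ x, |Ω x| ≤ B := fun x => hB _ (Set.mem_range_self x)
  have hqi : ∀ c d, IntervalIntegrable q volume c d := by
    intro c d
    rw [intervalIntegrable_iff]
    refine Measure.integrableOn_of_bounded (M := (δ ^ 2)⁻¹ * (2 * B)) (by simp) ?_ ?_
    · refine Measurable.aestronglyMeasurable ?_
      refine Measurable.indicator ?_ hmeas
      have := hc.measurable
      fun_prop
    · refine Eventually.of_forall fun θ => ?_
      have hB0 : 0 ≤ B := (abs_nonneg _).trans (hB' 0)
      simp only [hq, Set.indicator_apply, Set.mem_ofPred_eq]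
      split_ifs with h
      · rw [norm_mul, rpow_neg_two_abs, Real.norm_eq_abs, Real.norm_eq_abs, abs_inv,
          abs_of_nonneg (sq_nonneg (Real.cos (φ - θ))), ← sq_abs (Real.cos (φ - θ))]
        gcongr
        calc |Ω θ - Ω (φ + π / 2)| ≤ |Ω θ| + |Ω (φ + π / 2)| := abs_sub _ _
          _ ≤ 2 * B := by linarith [hB' θ, hB' (φ + π / 2)]
      · simp; positivity
  have h2 := integral_two_periods hqp hqi φ
  have h3 := intervalIntegral.integral_comp_add_right (a := -(π / 2)) (b := π / 2) q (φ + π / 2)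
  rw [show -(π / 2) + (φ + π / 2) = φ by ring, show π / 2 + (φ + π / 2) = φ + π by ring] at h3
  -- averaging over `t ↦ -t` about the singular point `φ + π/2` produces second differences
  have h4 := intervalIntegral.integral_comp_neg (a := -(π / 2)) (b := π / 2)
    (fun t => q (t + (φ + π / 2)))
  rw [neg_neg] at h4
  rw [h1, h2, ← h3, two_mul]
  nth_rw 2 [← h4]
  have hi1 : IntervalIntegrable (fun t => q (t + (φ + π / 2))) volume (-(π / 2)) (π / 2) := by
    have := (hqi φ (φ + π)).comp_add_right (φ + π / 2)
    convert this using 1 <;> ring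
  have hi2 : IntervalIntegrable (fun t => q (-t + (φ + π / 2))) volume (-(π / 2)) (π / 2) := by
    have := (hqi (φ + π) φ).comp_sub_left (φ + π / 2)
    convert this using 1
    · ext t; congr 1; ring
    · ring
    · ring
  rw [← intervalIntegral.integral_add hi1 hi2]
  congr 1
  ext t
  have c1 : Real.cos (φ - (t + (φ + π / 2))) = - Real.sin t := by
    rw [← Real.cos_add_pi_div_two, ← Real.cos_neg]; congr 1; ring
  have c2 : Real.cos (φ - (-t + (φ + π / 2))) = Real.sin t := by
    rw [← Real.cos_sub_pi_div_two]; congr 1; ring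
  simp only [hq, Set.indicator_apply, Set.mem_ofPred_eq, c1, c2, abs_neg, rpow_neg_two_abs, secD,
    hψ]
  split_ifs
  · rw [show t + (φ + π / 2) = φ + t + π / 2 by ring,
      show -t + (φ + π / 2) = φ - t + π / 2 by ring]
    ring
  · simp

/-- The explicit form of `Ω̃_log`: the principal value exists and is a hypersingular integral. -/
lemma OmtLog_eq {Ω : ℝ → ℝ} (hs : ContDiff ℝ (⊤ : ℕ∞) Ω) (hp : Function.Periodic Ω π) (φ : ℝ) :
    OmtLog Ω φ = (2 * π)⁻¹ - (4 * π ^ 2)⁻¹ * hyp (fun x => Ω (x + π / 2)) φ := by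
  have hψs : ContDiff ℝ (⊤ : ℕ∞) (fun x => Ω (x + π / 2)) := hs.comp (by fun_prop)
  have hψp : Function.Periodic (fun x => Ω (x + π / 2)) π := by
    intro x
    simp only
    rw [show x + π + π / 2 = x + π / 2 + π by ring, hp]
  obtain ⟨M, hM0, hM⟩ := secD_bound hψs hψp
  have hlim : Tendsto (pvInt Ω φ) (𝓝[>] 0) (𝓝 (hyp (fun x => Ω (x + π / 2)) φ)) := by
    have : Tendsto (fun δ => ∫ t in (-(π / 2))..(π / 2),
        {t : ℝ | δ ≤ |Real.sin t|}.indicator (secD (fun x => Ω (x + π / 2)) φ) t)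
        (𝓝[>] 0) (𝓝 (hyp (fun x => Ω (x + π / 2)) φ)) := by
      refine intervalIntegral.tendsto_integral_filter_of_dominated_convergence (fun _ => M)
        ?_ ?_ (by simp) ?_
      · refine Eventually.of_forall fun δ => ?_
        refine Measurable.aestronglyMeasurable (Measurable.indicator ?_ ?_)
        · exact (measurable_secD hψs.continuous).comp measurable_prodMk_left
        · exact measurableSet_le (by fun_prop) (by fun_prop)
      · refine Eventually.of_forall fun δ => Eventually.of_forall fun t ht => ?_
        rw [norm_indicator_eq_indicator_norm]
        refine (Set.indicator_le_self' (fun _ _ => norm_nonneg _) t).trans ?_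
        exact hM φ t (abs_le_of_mem_uIoc ht)
      · filter_upwards [ae_sin_ne_zero] with t ht _
        refine tendsto_const_nhds.congr' ?_
        have : Iic |Real.sin t| ∈ 𝓝[>] (0 : ℝ) :=
          mem_nhdsWithin_of_mem_nhds (Iic_mem_nhds (abs_pos.2 ht))
        filter_upwards [this] with δ hδ
        rw [Set.indicator_of_mem]
        exact hδ
    refine this.congr' ?_
    filter_upwards [self_mem_nhdsWithin] with δ hδ
    exact (pvInt_eq hs.continuous hp φ hδ).symm
  -- the limit exists, so `limUnder` is the genuine principal value
  have h2 : (2 * π) ^ (-(2 : ℝ)) = (4 * π ^ 2)⁻¹ := by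
    have := rpow_neg_two_abs (2 * π)
    rw [abs_of_pos (by positivity)] at this
    rw [this]; ring
  have : Tendsto (OmtLogFam Ω φ) (𝓝[>] 0)
      (𝓝 (-(2 * π) ^ (-(2 : ℝ)) * hyp (fun x => Ω (x + π / 2)) φ + (2 * π)⁻¹)) :=
    (hlim.const_mul _).add_const _
  rw [OmtLog, this.limUnder_eq, h2]
  ring

/-! ### Directional representation of the logarithmic kernel -/

/-- Symmetrised convolution over a period with the logarithmic kernel `log |sin|`. -/
def logConv (g : ℝ → ℝ) (τ : ℝ) : ℝ :=
  ∫ s in 0..π, (g (τ + s) + g (τ - s)) * Real.log (Real.sin s)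

lemma integrableOn_log_sin : IntegrableOn (fun s => Real.log (Real.sin s)) (Set.uIoc 0 π) := by
  have := intervalIntegrable_iff.1 (intervalIntegrable_log_sin (a := 0) (b := π))
  exact this

lemma continuous_logConv {g : ℝ → ℝ} (hg : Continuous g) {B : ℝ} (hB : ∀ x, |g x| ≤ B) :
    Continuous (logConv g) := by
  refine intervalIntegral.continuous_of_dominated_interval
    (bound := fun s => (2 * B) * |Real.log (Real.sin s)|) ?_ ?_ ?_ ?_
  · intro τ
    refine Measurable.aestronglyMeasurable ?_
    have := hg.measurable
    fun_prop
  · refine fun τ => Eventually.of_forall fun s _ => ?_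
    rw [norm_mul, Real.norm_eq_abs, Real.norm_eq_abs]
    gcongr
    exact (abs_add_le _ _).trans (by linarith [hB (τ + s), hB (τ - s)])
  · exact (intervalIntegrable_log_sin (a := 0) (b := π)).abs.const_mul _
  · refine Eventually.of_forall fun s _ => ?_
    fun_prop

lemma periodic_logConv {g : ℝ → ℝ} (hp : Function.Periodic g π) :
    Function.Periodic (logConv g) π := by
  intro τ
  unfold logConv
  congr 1
  ext s
  rw [show τ + π + s = τ + s + π by ring, show τ + π - s = τ - s + π by ring, hp, hp]

/-- Convolution with `log |sin|` acts on the `k`-th Fourier mode as multiplication by `-π/k`. -/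
lemma coeff_logConv {g : ℝ → ℝ} (hg : Continuous g) (hp : Function.Periodic g π) {B : ℝ}
    (hB : ∀ x, |g x| ≤ B) (k : ℕ) (hk : k ≠ 0) (β : ℝ) :
    ∫ x in 0..π, logConv g x * Real.cos (2 * k * x + β) =
      -(π / k) * ∫ x in 0..π, g x * Real.cos (2 * k * x + β) := by
  have hπ := Real.pi_pos
  have hk' : (k : ℝ) ≠ 0 := by exact_mod_cast hk
  unfold logConv
  simp_rw [← intervalIntegral.integral_mul_const]
  rw [intervalIntegral_intervalIntegral_swap]
  · have e : ∀ s, ∫ x in 0..π, (g (x + s) + g (x - s)) * Real.log (Real.sin s) *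
        Real.cos (2 * k * x + β) = (Real.cos (2 * k * s) * Real.log (Real.sin s)) *
          (2 * ∫ x in 0..π, g x * Real.cos (2 * k * x + β)) := by
      intro s
      have h1 := coeff_sym hg hp k β s
      have h2 : ∀ x, (g (x + s) + g (x - s)) * Real.log (Real.sin s) *
          Real.cos (2 * k * x + β) = Real.log (Real.sin s) *
          ((g (x + s) + g (x - s)) * Real.cos (2 * k * x + β)) := by
        intro x; ring
      simp_rw [h2]
      rw [intervalIntegral.integral_const_mul, h1]
      ring
    simp_rw [e]
    rw [intervalIntegral.integral_mul_const, integral_cos_mul_log_sin k hk]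
    field_simp
  · have hfin : IsFiniteMeasure (volume.restrict (Set.uIoc (0 : ℝ) π)) :=
      ⟨by simp [uIoc_of_le, hπ.le]⟩
    have hi : Integrable (fun p : ℝ × ℝ => Real.log (Real.sin p.2))
        ((volume.restrict (Set.uIoc 0 π)).prod (volume.restrict (Set.uIoc 0 π))) :=
      Integrable.comp_snd integrableOn_log_sin _
    have : IntegrableOn (fun p : ℝ × ℝ => Real.log (Real.sin p.2))
        (Set.uIoc 0 π ×ˢ Set.uIoc 0 π) := by
      rwa [IntegrableOn, Measure.volume_eq_prod, ← Measure.prod_restrict]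
    have h3 := Integrable.bdd_mul (c := 2 * B)
      (f := fun p : ℝ × ℝ => (g (p.1 + p.2) + g (p.1 - p.2)) * Real.cos (2 * k * p.1 + β)) this
      (Continuous.aestronglyMeasurable (by fun_prop)) (Eventually.of_forall fun p => ?_)
    · refine h3.congr (Eventually.of_forall fun p => ?_)
      simp only [Function.uncurry]
      ring
    · rw [norm_mul, Real.norm_eq_abs, Real.norm_eq_abs]
      have hB0 : 0 ≤ B := (abs_nonneg _).trans (hB 0)
      calc _ ≤ (2 * B) * 1 := by
            gcongr
            · exact (abs_add_le _ _).trans (by linarith [hB (p.1 + p.2), hB (p.1 - p.2)])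
            · exact Real.abs_cos_le_one _
        _ = _ := mul_one _

lemma SatisfiesH.continuous_OmtLog {Ω : ℝ → ℝ} (h : SatisfiesH Ω) : Continuous (OmtLog Ω) := by
  have hψs : ContDiff ℝ (⊤ : ℕ∞) (fun x => Ω (x + π / 2)) := h.1.comp (by fun_prop)
  have hψp : Function.Periodic (fun x => Ω (x + π / 2)) π := by
    intro x
    simp only
    rw [show x + π + π / 2 = x + π / 2 + π by ring, h.2.2.2]
  rw [funext (OmtLog_eq h.1 h.2.2.2)]
  have := continuous_hyp hψs hψp
  fun_prop

lemma SatisfiesH.periodic_OmtLog {Ω : ℝ → ℝ} (h : SatisfiesH Ω) :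
    Function.Periodic (OmtLog Ω) π := by
  have hψp : Function.Periodic (fun x => Ω (x + π / 2)) π := by
    intro x
    simp only
    rw [show x + π + π / 2 = x + π / 2 + π by ring, h.2.2.2]
  intro x
  rw [OmtLog_eq h.1 h.2.2.2, OmtLog_eq h.1 h.2.2.2, periodic_hyp hψp]

lemma SatisfiesH.bounded_OmtLog {Ω : ℝ → ℝ} (h : SatisfiesH Ω) : ∃ B, ∀ x, |OmtLog Ω x| ≤ B := by
  obtain ⟨B, hB⟩ := (h.periodic_OmtLog.isBounded_of_continuous Real.pi_pos.ne'
    h.continuous_OmtLog).exists_norm_le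
  exact ⟨B, fun x => hB _ (Set.mem_range_self x)⟩

/-- Fourier coefficients of `Ω̃_log`: the mean comes from the constant `1/(2π)`, and the `k`-th
mode is `k/π` times that of the rotated profile. -/
lemma SatisfiesH.coeff_OmtLog {Ω : ℝ → ℝ} (h : SatisfiesH Ω) (k : ℕ) (β : ℝ) :
    ∫ x in 0..π, OmtLog Ω x * Real.cos (2 * k * x + β) =
      (2 * π)⁻¹ * (∫ x in 0..π, Real.cos (2 * k * x + β)) +
      k / π * ∫ x in 0..π, Ω (x + π / 2) * Real.cos (2 * k * x + β) := by
  have hψs : ContDiff ℝ (⊤ : ℕ∞) (fun x => Ω (x + π / 2)) := h.1.comp (by fun_prop)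
  have hψp : Function.Periodic (fun x => Ω (x + π / 2)) π := by
    intro x
    simp only
    rw [show x + π + π / 2 = x + π / 2 + π by ring, h.2.2.2]
  have hc := continuous_hyp hψs hψp
  have h1 := coeff_hyp hψs hψp k β
  simp_rw [OmtLog_eq h.1 h.2.2.2, sub_mul, mul_assoc]
  simp_rw [mul_assoc] at h1
  rw [intervalIntegral.integral_sub (Continuous.intervalIntegrable (by fun_prop) _ _)
    (Continuous.intervalIntegrable (by fun_prop) _ _), intervalIntegral.integral_const_mul,
    intervalIntegral.integral_const_mul, h1]
  have := Real.pi_pos.ne'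
  field_simp
  ring

lemma SatisfiesH.integral_OmtLog {Ω : ℝ → ℝ} (h : SatisfiesH Ω) :
    ∫ x in (-π)..π, OmtLog Ω x = 1 := by
  have h1 := h.coeff_OmtLog 0 0
  have h2 := integral_two_periods h.periodic_OmtLog
    (fun c d => h.continuous_OmtLog.intervalIntegrable c d) 0
  simp at h1
  rw [zero_add] at h2
  rw [h2, h1]
  have := Real.pi_pos.ne'
  field_simp

/-- The angular profile is recovered from `Ω̃_log` by convolution with `log |sin|`. -/
lemma SatisfiesH.exists_rep {Ω : ℝ → ℝ} (h : SatisfiesH Ω) :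
    ∃ m, ∀ τ, Ω (τ + π / 2) + logConv (OmtLog Ω) τ = m := by
  obtain ⟨B, hB⟩ := h.bounded_OmtLog
  have hψp : Function.Periodic (fun x => Ω (x + π / 2)) π := by
    intro x
    simp only
    rw [show x + π + π / 2 = x + π / 2 + π by ring, h.2.2.2]
  have hΩc := h.1.continuous
  have hLc := continuous_logConv h.continuous_OmtLog hB
  refine const_of_coeff (f := fun τ => Ω (τ + π / 2) + logConv (OmtLog Ω) τ) (by fun_prop)
    (hψp.add (periodic_logConv h.periodic_OmtLog)) ?_
  intro k hk β
  simp only [add_mul]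
  rw [intervalIntegral.integral_add (Continuous.intervalIntegrable (by fun_prop) _ _)
    (Continuous.intervalIntegrable (by fun_prop) _ _),
    coeff_logConv h.continuous_OmtLog h.periodic_OmtLog hB k hk, h.coeff_OmtLog]
  have hz := integral_cos_two_mul k hk 0 β
  rw [zero_add] at hz
  rw [hz]
  have := Real.pi_pos.ne'
  have hk' : (k : ℝ) ≠ 0 := by exact_mod_cast hk
  generalize (∫ x in 0..π, Ω (x + π / 2) * Real.cos (2 * k * x + β)) = J
  field_simp
  ring

lemma ae_cos_sub_ne_zero (θ : ℝ) : ∀ᵐ φ : ℝ, Real.cos (φ - θ) ≠ 0 := by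
  have := (measurePreserving_add_right volume (π / 2 - θ)).quasiMeasurePreserving.ae
    ae_sin_ne_zero
  filter_upwards [this] with φ hφ
  rwa [← Real.sin_add_pi_div_two, show φ - θ + π / 2 = φ + (π / 2 - θ) by ring]

lemma intervalIntegrable_log_cos_sub (θ c d : ℝ) :
    IntervalIntegrable (fun φ => Real.log (Real.cos (φ - θ))) volume c d := by
  have := (intervalIntegrable_log_cos (a := c - θ) (b := d - θ)).comp_sub_right θ
  simpa using this

/-- A weight integrated against `log |cos (φ - θ)|` is a value of `logConv`, after shifting by
`π / 2`. -/
lemma integral_mul_log_cos_sub {g : ℝ → ℝ} (hg : Continuous g) (hp : Function.Periodic g π)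
    (θ : ℝ) :
    ∫ φ in (-π)..π, g φ * Real.log (Real.cos (φ - θ)) = logConv g (θ - π / 2) := by
  have hq : Function.Periodic (fun φ => g φ * Real.log (Real.cos (φ - θ))) π := by
    intro φ
    simp only
    rw [show φ + π - θ = φ - θ + π by ring, Real.cos_add_pi, Real.log_neg_eq_log, hp]
  have hi : ∀ c d, IntervalIntegrable (fun φ => g φ * Real.log (Real.cos (φ - θ))) volume c d :=
    fun c d => (intervalIntegrable_log_cos_sub θ c d).continuousOn_mul hg.continuousOn
  rw [integral_two_periods hq hi (θ - π / 2)]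
  have h1 := intervalIntegral.integral_comp_add_right (a := 0) (b := π)
    (fun φ => g φ * Real.log (Real.cos (φ - θ))) (θ - π / 2)
  rw [zero_add, add_comm π] at h1
  have e1 : ∀ s, Real.cos (s + (θ - π / 2) - θ) = Real.sin s := fun s => by
    rw [← Real.cos_sub_pi_div_two]; congr 1; ring
  simp only [e1] at h1
  have h2 := intervalIntegral.integral_comp_sub_left (a := 0) (b := π)
    (fun s => g (s + (θ - π / 2)) * Real.log (Real.sin s)) π
  simp only [sub_self, sub_zero, Real.sin_pi_sub] at h2
  have e2 : ∀ s, g (π - s + (θ - π / 2)) = g (θ - π / 2 - s) := fun s => by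
    rw [← hp (θ - π / 2 - s)]; congr 1; ring
  simp only [e2] at h2
  rw [← h1, two_mul]
  nth_rw 2 [← h2]
  rw [logConv, ← intervalIntegral.integral_add (intervalIntegrable_mul_log_sin (by fun_prop) _ _)
    (intervalIntegrable_mul_log_sin (by fun_prop) _ _)]
  congr 1
  ext s
  rw [add_comm s]
  ring

lemma nrm_mul_cos_ang (v : ℝ × ℝ) : nrm v * Real.cos (ang v) = v.1 := by
  have h := Complex.norm_mul_cos_arg ⟨v.1, v.2⟩
  have hn : ‖(⟨v.1, v.2⟩ : ℂ)‖ = nrm v := by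
    rw [Complex.norm_def, Complex.normSq_mk, nrm]; congr 1; ring
  rw [hn] at h
  unfold ang
  split_ifs with h1
  · rw [h1] at h; rw [Real.cos_neg]; exact h
  · exact h

lemma nrm_mul_sin_ang (v : ℝ × ℝ) : nrm v * Real.sin (ang v) = v.2 := by
  have h := Complex.norm_mul_sin_arg ⟨v.1, v.2⟩
  have hn : ‖(⟨v.1, v.2⟩ : ℂ)‖ = nrm v := by
    rw [Complex.norm_def, Complex.normSq_mk, nrm]; congr 1; ring
  rw [hn] at h
  unfold ang
  split_ifs with h1
  · rw [h1] at h; rw [Real.sin_neg, Real.sin_pi] at *; simpa using h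
  · exact h

lemma nrm_pos {v : ℝ × ℝ} (hv : v ≠ 0) : 0 < nrm v := by
  refine Real.sqrt_pos.2 ?_
  by_contra hle
  apply hv
  have h1 : v.1 ^ 2 = 0 := by nlinarith [sq_nonneg v.1, sq_nonneg v.2]
  have h2 : v.2 ^ 2 = 0 := by nlinarith [sq_nonneg v.1, sq_nonneg v.2]
  exact Prod.ext (by simpa using h1) (by simpa using h2)

/-- Polar form of `log |v · e_φ|`; it fails only where `v · e_φ = 0`, because `log 0 = 0`. -/
lemma log_dot_ae {v : ℝ × ℝ} (hv : v ≠ 0) :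
    ∀ᵐ φ : ℝ, Real.log (v.1 * Real.cos φ + v.2 * Real.sin φ) =
      Real.log (nrm v) + Real.log (Real.cos (φ - ang v)) := by
  filter_upwards [ae_cos_sub_ne_zero (ang v)] with φ hφ
  rw [← Real.log_mul (nrm_pos hv).ne' hφ, Real.cos_sub]
  congr 1
  rw [← nrm_mul_cos_ang v, ← nrm_mul_sin_ang v]
  rw [nrm_mul_cos_ang v, nrm_mul_sin_ang v]
  linear_combination (-Real.cos φ) * nrm_mul_cos_ang v - Real.sin φ * nrm_mul_sin_ang v

/-- The anisotropic logarithmic kernel is a superposition of one-dimensional logarithmic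
kernels `-log |v · e_φ|` with weight `Ω̃_log`. -/
lemma SatisfiesH.exists_kernel_rep {Ω : ℝ → ℝ} (h : SatisfiesH Ω) :
    ∃ m, ∀ v : ℝ × ℝ, v ≠ 0 → -Real.log (nrm v) + Ω (ang v) =
      m - ∫ φ in (-π)..π, OmtLog Ω φ * Real.log (v.1 * Real.cos φ + v.2 * Real.sin φ) := by
  obtain ⟨m, hm⟩ := h.exists_rep
  refine ⟨m, fun v hv => ?_⟩
  have hg := h.continuous_OmtLog
  have e : ∫ φ in (-π)..π, OmtLog Ω φ * Real.log (v.1 * Real.cos φ + v.2 * Real.sin φ) =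
      ∫ φ in (-π)..π, (OmtLog Ω φ * Real.log (nrm v) +
        OmtLog Ω φ * Real.log (Real.cos (φ - ang v))) := by
    apply intervalIntegral.integral_congr_ae
    filter_upwards [log_dot_ae hv] with φ hφ _
    rw [hφ, mul_add]
  rw [e, intervalIntegral.integral_add (Continuous.intervalIntegrable (by fun_prop) _ _)
    ((intervalIntegrable_log_cos_sub _ _ _).continuousOn_mul hg.continuousOn),
    intervalIntegral.integral_mul_const, h.integral_OmtLog,
    integral_mul_log_cos_sub hg h.periodic_OmtLog]
  have := hm (ang v - π / 2)
  rw [sub_add_cancel] at this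
  linarith

/-! ### Projections of the uniform law on an ellipse -/

/-- The half-width `r_φ` of the ellipse `B(0; a, b)` in the direction `e_φ`. -/
def wid (a b φ : ℝ) : ℝ := Real.sqrt (a ^ 2 * Real.cos φ ^ 2 + b ^ 2 * Real.sin φ ^ 2)

lemma wid_sq_pos {a b : ℝ} (ha : 0 < a) (hb : 0 < b) (φ : ℝ) :
    0 < a ^ 2 * Real.cos φ ^ 2 + b ^ 2 * Real.sin φ ^ 2 := by
  have h := Real.sin_sq_add_cos_sq φ
  rcases eq_or_ne (Real.cos φ) 0 with hc | hc
  · rw [hc] at h ⊢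
    have : Real.sin φ ^ 2 = 1 := by linarith
    rw [this]
    positivity
  · have : 0 < Real.cos φ ^ 2 := by positivity
    positivity

lemma wid_pos {a b : ℝ} (ha : 0 < a) (hb : 0 < b) (φ : ℝ) : 0 < wid a b φ :=
  Real.sqrt_pos.2 (wid_sq_pos ha hb φ)

lemma wid_sq {a b : ℝ} (ha : 0 < a) (hb : 0 < b) (φ : ℝ) :
    wid a b φ ^ 2 = a ^ 2 * Real.cos φ ^ 2 + b ^ 2 * Real.sin φ ^ 2 :=
  Real.sq_sqrt (wid_sq_pos ha hb φ).le

lemma continuous_wid (a b : ℝ) : Continuous (wid a b) := by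
  unfold wid
  fun_prop

lemma measurableSet_ellipseSet (a b : ℝ) : MeasurableSet (ellipseSet a b) :=
  measurableSet_le (by fun_prop) (by fun_prop)

/-- A linear map carrying the unit disk onto the ellipse `B(0; a, b)`; when `(p, q)` is the unit
vector `(a cos φ, b sin φ) / r_φ`, it turns `y · e_φ` into `r_φ` times the first coordinate. -/
def ellMap (a b p q : ℝ) : ℝ × ℝ →ₗ[ℝ] ℝ × ℝ :=
  Matrix.toLin (Module.Basis.finTwoProd ℝ) (Module.Basis.finTwoProd ℝ)
    !![a * p, -(a * q); b * q, b * p]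

lemma ellMap_apply (a b p q : ℝ) (z : ℝ × ℝ) :
    ellMap a b p q z = (a * p * z.1 + -(a * q) * z.2, b * q * z.1 + b * p * z.2) := by
  rw [ellMap, Matrix.toLin_finTwoProd_apply]

lemma det_ellMap (a b p q : ℝ) (h : p ^ 2 + q ^ 2 = 1) :
    LinearMap.det (ellMap a b p q) = a * b := by
  rw [ellMap, LinearMap.det_toLin, Matrix.det_fin_two_of]
  linear_combination a * b * h

lemma lintegral_ellMap {a b p q : ℝ} (ha : 0 < a) (hb : 0 < b) (h : p ^ 2 + q ^ 2 = 1)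
    {G : ℝ × ℝ → ℝ≥0∞} (hG : Measurable G) :
    ∫⁻ y, G y = ENNReal.ofReal (a * b) * ∫⁻ z, G (ellMap a b p q z) := by
  have hd := det_ellMap a b p q h
  have hab : 0 < a * b := by positivity
  have h1 := Measure.map_linearMap_addHaar_eq_smul_addHaar (volume : Measure (ℝ × ℝ))
    (f := ellMap a b p q) (by rw [hd]; exact hab.ne')
  have h2 : Measurable (ellMap a b p q) :=
    (LinearMap.continuous_of_finiteDimensional _).measurable
  rw [← lintegral_map hG h2, h1, lintegral_smul_measure, hd, smul_eq_mul, ← mul_assoc,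
    ← ENNReal.ofReal_mul hab.le, abs_of_pos (inv_pos.2 hab), mul_inv_cancel₀ hab.ne',
    ENNReal.ofReal_one, one_mul]

lemma volume_chord (t : ℝ) :
    volume {u : ℝ | t ^ 2 + u ^ 2 ≤ 1} = ENNReal.ofReal (2 * Real.sqrt (1 - t ^ 2)) := by
  rcases le_or_gt 0 (1 - t ^ 2) with h | h
  · have : {u : ℝ | t ^ 2 + u ^ 2 ≤ 1} =
        Set.Icc (-Real.sqrt (1 - t ^ 2)) (Real.sqrt (1 - t ^ 2)) := by
      ext u
      rw [Set.mem_ofPred_eq, Set.mem_Icc, ← abs_le, Real.le_sqrt (abs_nonneg u) h, sq_abs]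
      constructor <;> intro h <;> linarith
    rw [this, Real.volume_Icc]
    congr 1
    ring
  · have : {u : ℝ | t ^ 2 + u ^ 2 ≤ 1} = ∅ := by
      ext u
      simp only [Set.mem_ofPred_eq, Set.mem_empty_iff_false, iff_false, not_le]
      nlinarith [sq_nonneg u]
    rw [this, Real.sqrt_eq_zero_of_nonpos h.le]
    simp

lemma lintegral_disk {F : ℝ → ℝ≥0∞} (hF : Measurable F) :
    ∫⁻ z : ℝ × ℝ, {z : ℝ × ℝ | z.1 ^ 2 + z.2 ^ 2 ≤ 1}.indicator (fun z => F z.1) z =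
      ∫⁻ α in Set.Ioo 0 π, ENNReal.ofReal (2 * Real.sin α ^ 2) * F (Real.cos α) := by
  have hm : MeasurableSet {z : ℝ × ℝ | z.1 ^ 2 + z.2 ^ 2 ≤ 1} :=
    measurableSet_le (by fun_prop) (by fun_prop)
  have hFm : Measurable fun z : ℝ × ℝ => F z.1 := hF.comp measurable_fst
  rw [Measure.volume_eq_prod, lintegral_prod _ ((hFm.indicator hm).aemeasurable)]
  have e : ∀ t : ℝ, ∫⁻ u, {z : ℝ × ℝ | z.1 ^ 2 + z.2 ^ 2 ≤ 1}.indicator (fun z => F z.1) (t, u) =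
      ENNReal.ofReal (2 * Real.sqrt (1 - t ^ 2)) * F t := by
    intro t
    have hms : MeasurableSet {u : ℝ | t ^ 2 + u ^ 2 ≤ 1} :=
      measurableSet_le (by fun_prop) (by fun_prop)
    rw [← volume_chord, mul_comm, ← lintegral_indicator_const hms]
    rfl
  simp_rw [e]
  have hsupp : ∫⁻ t, ENNReal.ofReal (2 * Real.sqrt (1 - t ^ 2)) * F t =
      ∫⁻ t in Set.Ioo (-1) 1, ENNReal.ofReal (2 * Real.sqrt (1 - t ^ 2)) * F t := by
    rw [← lintegral_indicator measurableSet_Ioo]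
    congr 1
    ext t
    by_cases ht : t ∈ Set.Ioo (-1 : ℝ) 1
    · rw [Set.indicator_of_mem ht]
    · rw [Set.indicator_of_notMem ht, Real.sqrt_eq_zero_of_nonpos]
      · simp
      · by_contra! hc
        exact ht (abs_lt.1 ((sq_lt_one_iff_abs_lt_one t).1 (by linarith)))
  have himg : Real.cos '' Set.Ioo 0 π = Set.Ioo (-1) 1 := by
    ext t
    constructor
    · rintro ⟨α, ⟨h0, h1⟩, rfl⟩
      constructor
      · rw [← Real.cos_pi]
        exact Real.cos_lt_cos_of_nonneg_of_le_pi h0.le le_rfl h1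
      · rw [← Real.cos_zero]
        exact Real.cos_lt_cos_of_nonneg_of_le_pi le_rfl h1.le h0
    · rintro ⟨h0, h1⟩
      exact ⟨Real.arccos t, ⟨Real.arccos_pos.2 h1, Real.arccos_lt_pi.2 h0⟩,
        Real.cos_arccos h0.le h1.le⟩
  rw [hsupp, ← himg, lintegral_image_eq_lintegral_abs_deriv_mul measurableSet_Ioo
    (fun α _ => (Real.hasDerivAt_cos α).hasDerivWithinAt)
    (Real.injOn_cos.mono Set.Ioo_subset_Icc_self)]
  refine setLIntegral_congr_fun measurableSet_Ioo fun α hα => ?_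
  have hs := Real.sin_pos_of_mem_Ioo hα
  rw [← mul_assoc, ← ENNReal.ofReal_mul (abs_nonneg _), abs_neg, abs_of_pos hs,
    ← Real.sin_sq, Real.sqrt_sq hs.le]
  congr 2
  ring

/-- Slicing the ellipse perpendicularly to `e_φ` gives a semicircle distribution. -/
lemma lintegral_ellipse {a b : ℝ} (ha : 0 < a) (hb : 0 < b) (φ : ℝ) {F : ℝ → ℝ≥0∞}
    (hF : Measurable F) :
    ∫⁻ y in ellipseSet a b, F (y.1 * Real.cos φ + y.2 * Real.sin φ) =
      ∫⁻ α in Set.Ioo 0 π, ENNReal.ofReal (2 * a * b * Real.sin α ^ 2) *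
        F (wid a b φ * Real.cos α) := by
  have hr := wid_pos ha hb φ
  have hr2 := wid_sq ha hb φ
  set r := wid a b φ
  have hpq : (a * Real.cos φ / r) ^ 2 + (b * Real.sin φ / r) ^ 2 = 1 := by
    field_simp
    linarith
  have hFm : Measurable fun y : ℝ × ℝ => F (y.1 * Real.cos φ + y.2 * Real.sin φ) :=
    hF.comp (by fun_prop)
  rw [← lintegral_indicator (measurableSet_ellipseSet a b),
    lintegral_ellMap ha hb hpq (hFm.indicator (measurableSet_ellipseSet a b))]
  have e : ∀ z : ℝ × ℝ, (ellipseSet a b).indicator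
      (fun y => F (y.1 * Real.cos φ + y.2 * Real.sin φ))
        (ellMap a b (a * Real.cos φ / r) (b * Real.sin φ / r) z) =
      {z : ℝ × ℝ | z.1 ^ 2 + z.2 ^ 2 ≤ 1}.indicator (fun z => F (r * z.1)) z := by
    intro z
    rw [ellMap_apply]
    have h1 : (a * (a * Real.cos φ / r) * z.1 + -(a * (b * Real.sin φ / r)) * z.2) ^ 2 / a ^ 2 +
        (b * (b * Real.sin φ / r) * z.1 + b * (a * Real.cos φ / r) * z.2) ^ 2 / b ^ 2 =
        z.1 ^ 2 + z.2 ^ 2 := by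
      generalize a * Real.cos φ / r = p at *
      generalize b * Real.sin φ / r = q at *
      have : a ≠ 0 := ha.ne'
      field_simp
      linear_combination (z.1 ^ 2 + z.2 ^ 2) * hpq
    have h2 : (a * (a * Real.cos φ / r) * z.1 + -(a * (b * Real.sin φ / r)) * z.2) * Real.cos φ +
        (b * (b * Real.sin φ / r) * z.1 + b * (a * Real.cos φ / r) * z.2) * Real.sin φ =
        r * z.1 := by
      field_simp
      linear_combination (-z.1) * hr2
    simp only [Set.indicator, ellipseSet, Set.mem_ofPred_eq, h1, h2]
  simp_rw [e]
  rw [lintegral_disk (F := fun t => F (r * t)) (hF.comp (by fun_prop)),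
    ← lintegral_const_mul _ (by fun_prop)]
  congr 1
  ext α
  rw [← mul_assoc, ← ENNReal.ofReal_mul (by positivity)]
  congr 2
  ring

/-- The image of the uniform measure on the ellipse under `y ↦ y · e_φ` is the semicircle law of
radius `r_φ` (of total mass `π a b`), in the variable `t = r_φ cos α`. -/
lemma map_ellipse {a b : ℝ} (ha : 0 < a) (hb : 0 < b) (φ : ℝ) :
    Measure.map (fun y : ℝ × ℝ => y.1 * Real.cos φ + y.2 * Real.sin φ)
        (volume.restrict (ellipseSet a b)) =
      Measure.map (fun α => wid a b φ * Real.cos α)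
        ((volume.restrict (Set.Ioo 0 π)).withDensity
          (fun α => ENNReal.ofReal (2 * a * b * Real.sin α ^ 2))) := by
  refine Measure.ext_of_lintegral _ fun F hF => ?_
  rw [lintegral_map hF (by fun_prop), lintegral_map hF (by fun_prop), lintegral_ellipse ha hb φ hF,
    lintegral_withDensity_eq_lintegral_mul _ (by fun_prop) (by fun_prop)]
  rfl

lemma integral_ellipse {a b : ℝ} (ha : 0 < a) (hb : 0 < b) (φ : ℝ) {F : ℝ → ℝ}
    (hF : Measurable F) :
    ∫ y in ellipseSet a b, F (y.1 * Real.cos φ + y.2 * Real.sin φ) =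
      ∫ α in 0..π, 2 * a * b * Real.sin α ^ 2 * F (wid a b φ * Real.cos α) := by
  rw [← integral_map (φ := fun y : ℝ × ℝ => y.1 * Real.cos φ + y.2 * Real.sin φ) (by fun_prop)
    hF.aestronglyMeasurable, map_ellipse ha hb, integral_map (by fun_prop) hF.aestronglyMeasurable,
    intervalIntegral.integral_of_le Real.pi_pos.le, integral_Ioc_eq_integral_Ioo]
  rw [integral_withDensity_eq_integral_toReal_smul (by fun_prop)
    (Eventually.of_forall fun _ => ENNReal.ofReal_lt_top)]
  congr 1
  ext α
  rw [ENNReal.toReal_ofReal (by positivity), smul_eq_mul]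

lemma volume_ellipse {a b : ℝ} (ha : 0 < a) (hb : 0 < b) :
    volume (ellipseSet a b) = ENNReal.ofReal (π * a * b) := by
  have h := lintegral_ellipse ha hb 0 (F := fun _ => 1) measurable_const
  simp only [lintegral_one, Measure.restrict_apply_univ, mul_one] at h
  rw [h, ← ofReal_integral_eq_lintegral_ofReal _ (Eventually.of_forall fun α => by positivity),
    ← integral_Ioc_eq_integral_Ioo, ← intervalIntegral.integral_of_le Real.pi_pos.le,
    intervalIntegral.integral_const_mul, integral_sin_sq]
  · simp
    congr 1
    ring
  · have : IntervalIntegrable (fun α => 2 * a * b * Real.sin α ^ 2) volume 0 π :=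
      Continuous.intervalIntegrable (by fun_prop) _ _
    rw [intervalIntegrable_iff, Set.uIoc_of_le Real.pi_pos.le] at this
    exact IntegrableOn.mono_set this Set.Ioo_subset_Ioc_self

/-! ### The semicircle potential -/

lemma intervalIntegrable_log_sub_cos (σ c d : ℝ) :
    IntervalIntegrable (fun α => Real.log (σ - Real.cos α)) volume c d := by
  have h : MeromorphicOn (fun α : ℝ => σ - Real.cos α) (Set.uIcc c d) := fun x _ => by fun_prop
  exact h.intervalIntegrable_log

lemma intervalIntegrable_sin_sq_mul_log (σ c d : ℝ) :
    IntervalIntegrable (fun α => Real.sin α ^ 2 * Real.log (σ - Real.cos α)) volume c d :=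
  (intervalIntegrable_log_sub_cos σ c d).continuousOn_mul
    (Continuous.continuousOn (by fun_prop))

lemma intervalIntegrable_log_sin_half (β c d : ℝ) :
    IntervalIntegrable (fun α => Real.log (Real.sin ((α + β) / 2))) volume c d := by
  have h : MeromorphicOn (fun α : ℝ => Real.sin ((α + β) / 2)) (Set.uIcc c d) :=
    fun x _ => by fun_prop
  exact h.intervalIntegrable_log

lemma ae_sin_half_ne_zero (β : ℝ) : ∀ᵐ α : ℝ, Real.sin ((α + β) / 2) ≠ 0 := by
  have h : {α : ℝ | Real.sin ((α + β) / 2) = 0} ⊆ Set.range fun n : ℤ => 2 * ((n : ℝ) * π) - β := by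
    intro α hα
    obtain ⟨n, hn⟩ := Real.sin_eq_zero_iff.1 hα
    exact ⟨n, by simp only; rw [hn]; ring⟩
  have h2 : ({α : ℝ | Real.sin ((α + β) / 2) = 0}).Countable :=
    (Set.countable_range _).mono h
  filter_upwards [h2.ae_notMem volume] with t ht using ht

/-- Computed by the substitution `α = 2s - β` from the Fourier coefficients of `log sin`. -/
lemma integral_sin_sq_mul_log_sin_half (β : ℝ) :
    ∫ α in (-π)..π, Real.sin α ^ 2 * Real.log (Real.sin ((α + β) / 2)) =
      -(π * Real.log 2) + π / 4 * Real.cos (2 * β) := by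
  have h1 := intervalIntegral.integral_comp_div_add (a := -π) (b := π)
    (fun s => Real.sin (2 * s - β) ^ 2 * Real.log (Real.sin s)) (two_ne_zero) (β / 2)
  have e1 : ∀ α : ℝ, Real.sin (2 * (α / 2 + β / 2) - β) ^ 2 * Real.log (Real.sin (α / 2 + β / 2)) =
      Real.sin α ^ 2 * Real.log (Real.sin ((α + β) / 2)) := by
    intro α
    rw [show 2 * (α / 2 + β / 2) - β = α by ring, add_div]
  simp only [e1] at h1
  have hp : Function.Periodic (fun s => Real.sin (2 * s - β) ^ 2 * Real.log (Real.sin s)) π := by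
    intro s
    simp only
    rw [show 2 * (s + π) - β = 2 * s - β + 2 * π by ring, Real.sin_add_two_pi, Real.sin_add_pi,
      Real.log_neg_eq_log]
  have h2 := hp.intervalIntegral_add_eq (-π / 2 + β / 2) 0
  rw [show -π / 2 + β / 2 + π = π / 2 + β / 2 by ring, zero_add] at h2
  rw [h1, h2, smul_eq_mul]
  have e2 : ∀ s, Real.sin (2 * s - β) ^ 2 * Real.log (Real.sin s) =
      1 / 2 * Real.log (Real.sin s) -
        (Real.cos (2 * β) / 2) * (Real.cos (2 * (2 : ℕ) * s) * Real.log (Real.sin s)) -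
        (Real.sin (2 * β) / 2) * (Real.sin (2 * (2 : ℕ) * s) * Real.log (Real.sin s)) := by
    intro s
    have h3 : Real.sin (2 * s - β) ^ 2 = 1 / 2 - Real.cos (2 * (2 : ℕ) * s - 2 * β) / 2 := by
      rw [show (2 * (2 : ℕ) * s - 2 * β : ℝ) = 2 * (2 * s - β) by push_cast; ring, Real.cos_two_mul,
        Real.sin_sq]
      ring
    rw [h3, Real.cos_sub]
    ring
  simp_rw [e2]
  have i0 : IntervalIntegrable (fun s => Real.log (Real.sin s)) volume 0 π :=
    intervalIntegrable_log_sin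
  have i1 := intervalIntegrable_mul_log_sin
    (f := fun s => Real.cos (2 * (2 : ℕ) * s)) (by fun_prop) 0 π
  have i2 := intervalIntegrable_mul_log_sin
    (f := fun s => Real.sin (2 * (2 : ℕ) * s)) (by fun_prop) 0 π
  rw [intervalIntegral.integral_sub ((i0.const_mul _).sub (i1.const_mul _)) (i2.const_mul _),
    intervalIntegral.integral_sub (i0.const_mul _) (i1.const_mul _),
    intervalIntegral.integral_const_mul, intervalIntegral.integral_const_mul,
    intervalIntegral.integral_const_mul, integral_cos_mul_log_sin 2 two_ne_zero,
    integral_sin_mul_log_sin, integral_log_sin_zero_pi]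
  push_cast
  ring

/-- Logarithmic potential of the semicircle law at a point `cos β` of its support. -/
lemma integral_sin_sq_mul_log_cos_sub (β : ℝ) :
    ∫ α in 0..π, Real.sin α ^ 2 * Real.log (Real.cos β - Real.cos α) =
      -(π / 2 * Real.log 2) + π / 4 * Real.cos (2 * β) := by
  -- symmetrising in `α` allows the product formula for `cos β - cos α` over a full period
  have hsym : ∫ α in (-π)..π, Real.sin α ^ 2 * Real.log (Real.cos β - Real.cos α) =
      2 * ∫ α in 0..π, Real.sin α ^ 2 * Real.log (Real.cos β - Real.cos α) := by
    rw [← intervalIntegral.integral_add_adjacent_intervals (b := 0)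
      (intervalIntegrable_sin_sq_mul_log _ _ _) (intervalIntegrable_sin_sq_mul_log _ _ _), two_mul]
    congr 1
    have := intervalIntegral.integral_comp_neg (a := 0) (b := π)
      (fun α => Real.sin α ^ 2 * Real.log (Real.cos β - Real.cos α))
    rw [neg_zero] at this
    rw [← this]
    simp
  have e : ∫ α in (-π)..π, Real.sin α ^ 2 * Real.log (Real.cos β - Real.cos α) =
      ∫ α in (-π)..π, (Real.log 2 * Real.sin α ^ 2 +
        Real.sin α ^ 2 * Real.log (Real.sin ((α + β) / 2)) +
        Real.sin α ^ 2 * Real.log (Real.sin ((α + -β) / 2))) := by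
    apply intervalIntegral.integral_congr_ae
    filter_upwards [ae_sin_half_ne_zero β, ae_sin_half_ne_zero (-β)] with α h1 h2 _
    rw [Real.cos_sub_cos, show (β - α) / 2 = -((α + -β) / 2) by ring, Real.sin_neg, add_comm β,
      show ∀ x y : ℝ, -2 * x * -y = 2 * x * y by intro x y; ring,
      Real.log_mul (mul_ne_zero two_ne_zero h1) h2, Real.log_mul two_ne_zero h1]
    ring
  have hs : ∀ γ, IntervalIntegrable (fun α => Real.sin α ^ 2 * Real.log (Real.sin ((α + γ) / 2)))
      volume (-π) π := fun γ => (intervalIntegrable_log_sin_half γ _ _).continuousOn_mul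
        (Continuous.continuousOn (by fun_prop))
  have h0 : IntervalIntegrable (fun α => Real.log 2 * Real.sin α ^ 2) volume (-π) π :=
    Continuous.intervalIntegrable (by fun_prop) _ _
  rw [intervalIntegral.integral_add (h0.add (hs β)) (hs (-β)),
    intervalIntegral.integral_add h0 (hs β), intervalIntegral.integral_const_mul,
    integral_sin_sq_mul_log_sin_half, integral_sin_sq_mul_log_sin_half, integral_sin_sq, hsym] at e
  simp only [Real.sin_pi, Real.sin_neg, mul_neg, Real.cos_neg] at e
  linarith

lemma integral_sin_sq_mul_sq (σ : ℝ) :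
    ∫ α in 0..π, Real.sin α ^ 2 * (σ - Real.cos α) ^ 2 = π / 2 * (σ ^ 2 + 1 / 4) := by
  have e : ∀ α, Real.sin α ^ 2 * (σ - Real.cos α) ^ 2 = σ ^ 2 * Real.sin α ^ 2 -
      2 * σ * (Real.sin α ^ 2 * Real.cos α) + Real.sin α ^ 2 * Real.cos α ^ 2 := fun α => by ring
  simp_rw [e]
  rw [intervalIntegral.integral_add (Continuous.intervalIntegrable (by fun_prop) _ _)
    (Continuous.intervalIntegrable (by fun_prop) _ _),
    intervalIntegral.integral_sub (Continuous.intervalIntegrable (by fun_prop) _ _)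
    (Continuous.intervalIntegrable (by fun_prop) _ _), intervalIntegral.integral_const_mul,
    intervalIntegral.integral_const_mul, integral_sin_sq, integral_sin_sq_mul_cos,
    integral_sin_sq_mul_cos_sq]
  have : Real.sin (4 * π) = 0 := by exact_mod_cast Real.sin_nat_mul_pi 4
  simp [this]
  ring

/-- The potential at `σ` of the semicircle law on `[-1, 1]` for the kernel `t² - log |t|`, written
in the variable `t = cos α`. `Real.log` is even, so no absolute value is needed. -/
def semiPot (σ : ℝ) : ℝ :=
  2 / π * ∫ α in 0..π, Real.sin α ^ 2 * ((σ - Real.cos α) ^ 2 - Real.log (σ - Real.cos α))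

lemma semiPot_eq (σ : ℝ) : semiPot σ = σ ^ 2 + 1 / 4 -
    2 / π * ∫ α in 0..π, Real.sin α ^ 2 * Real.log (σ - Real.cos α) := by
  unfold semiPot
  simp_rw [mul_sub]
  rw [intervalIntegral.integral_sub (Continuous.intervalIntegrable (by fun_prop) _ _)
    (intervalIntegrable_sin_sq_mul_log _ _ _), integral_sin_sq_mul_sq, mul_sub]
  have := Real.pi_pos.ne'
  field_simp

lemma semiPot_of_abs_le {σ : ℝ} (h : |σ| ≤ 1) : semiPot σ = 3 / 4 + Real.log 2 := by
  obtain ⟨h1, h2⟩ := abs_le.1 h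
  have hc := Real.cos_arccos h1 h2
  have hL := integral_sin_sq_mul_log_cos_sub (Real.arccos σ)
  rw [Real.cos_two_mul, hc] at hL
  rw [semiPot_eq, hL]
  have := Real.pi_pos.ne'
  field_simp
  ring

lemma semiPot_neg (σ : ℝ) : semiPot (-σ) = semiPot σ := by
  rw [semiPot_eq, semiPot_eq, neg_sq]
  congr 2
  have h := intervalIntegral.integral_comp_sub_left (a := 0) (b := π)
    (fun α => Real.sin α ^ 2 * Real.log (-σ - Real.cos α)) π
  simp only [sub_self, sub_zero, Real.sin_pi_sub, Real.cos_pi_sub] at h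
  rw [← h]
  congr 1
  ext α
  rw [show -σ - -Real.cos α = -(σ - Real.cos α) by ring, Real.log_neg_eq_log]

lemma le_semiPot_of_one_le {σ : ℝ} (h : 1 ≤ σ) : 3 / 4 + Real.log 2 ≤ semiPot σ := by
  have hπ := Real.pi_pos
  have h1 := semiPot_of_abs_le (σ := 1) (by simp)
  rw [semiPot_eq] at h1 ⊢
  -- concavity of the logarithm, compared with its tangent at the edge `σ = 1`
  have hle : ∫ α in 0..π, Real.sin α ^ 2 * Real.log (σ - Real.cos α) ≤
      ∫ α in 0..π, (Real.sin α ^ 2 * Real.log (1 - Real.cos α) +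
        (σ - 1) * (1 + Real.cos α)) := by
    refine intervalIntegral.integral_mono_on_of_le_Ioo hπ.le
      (intervalIntegrable_sin_sq_mul_log _ _ _) ((intervalIntegrable_sin_sq_mul_log _ _ _).add
        (Continuous.intervalIntegrable (by fun_prop) _ _)) fun α hα => ?_
    have hc : 0 < 1 - Real.cos α := by
      have := Real.cos_lt_cos_of_nonneg_of_le_pi le_rfl hα.2.le hα.1
      rw [Real.cos_zero] at this
      linarith
    have hc' : 0 < σ - Real.cos α := by linarith
    have hl : Real.log (σ - Real.cos α) ≤
        Real.log (1 - Real.cos α) + (σ - 1) / (1 - Real.cos α) := by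
      have := Real.log_le_sub_one_of_pos (div_pos hc' hc)
      rw [Real.log_div hc'.ne' hc.ne'] at this
      have e : (σ - Real.cos α) / (1 - Real.cos α) - 1 = (σ - 1) / (1 - Real.cos α) := by
        field_simp
        ring
      linarith
    calc Real.sin α ^ 2 * Real.log (σ - Real.cos α)
        ≤ Real.sin α ^ 2 * (Real.log (1 - Real.cos α) + (σ - 1) / (1 - Real.cos α)) := by gcongr
      _ = _ := by
        rw [mul_add, Real.sin_sq]
        field_simp
        ring
  rw [intervalIntegral.integral_add (intervalIntegrable_sin_sq_mul_log _ _ _)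
    (Continuous.intervalIntegrable (by fun_prop) _ _), intervalIntegral.integral_const_mul,
    intervalIntegral.integral_add (by simp) (Continuous.intervalIntegrable (by fun_prop) _ _),
    integral_cos] at hle
  simp only [intervalIntegral.integral_const, sub_zero, smul_eq_mul, mul_one, Real.sin_pi,
    Real.sin_zero, add_zero] at hle
  have h2 := mul_le_mul_of_nonneg_left hle (show 0 ≤ 2 / π by positivity)
  have h3 : 2 / π * ((σ - 1) * π) = 2 * (σ - 1) := by field_simp
  rw [mul_add, h3] at h2
  nlinarith [sq_nonneg (σ - 1)]

lemma le_semiPot (σ : ℝ) : 3 / 4 + Real.log 2 ≤ semiPot σ := by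
  rcases le_total |σ| 1 with h | h
  · exact (semiPot_of_abs_le h).ge
  · rcases le_abs.1 h with h | h
    · exact le_semiPot_of_one_le h
    · rw [← semiPot_neg]
      exact le_semiPot_of_one_le h

/-! ### Directional kernels and the quadratic correction -/

lemma ae_sub_cos_ne_zero (σ : ℝ) : ∀ᵐ α : ℝ, σ - Real.cos α ≠ 0 := by
  by_cases h : ∃ β, Real.cos β = σ
  · obtain ⟨β, rfl⟩ := h
    filter_upwards [ae_sin_half_ne_zero β, ae_sin_half_ne_zero (-β)] with α h1 h2
    rw [Real.cos_sub_cos, show (β - α) / 2 = -((α + -β) / 2) by ring, Real.sin_neg, add_comm β]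
    simp [h1, h2]
  · push Not at h
    exact Eventually.of_forall fun α hα => h α (sub_eq_zero.1 hα).symm

/-- The one-dimensional kernel obtained from direction `e_φ`, evaluated at `v`. -/
def dirKer (a b φ : ℝ) (v : ℝ × ℝ) : ℝ :=
  (v.1 * Real.cos φ + v.2 * Real.sin φ) ^ 2 / wid a b φ ^ 2 -
    Real.log (v.1 * Real.cos φ + v.2 * Real.sin φ)

lemma integral_dirKer {a b : ℝ} (ha : 0 < a) (hb : 0 < b) (φ : ℝ) (x : ℝ × ℝ) :
    (π * a * b)⁻¹ * ∫ y in ellipseSet a b, dirKer a b φ (x - y) =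
      semiPot ((x.1 * Real.cos φ + x.2 * Real.sin φ) / wid a b φ) - Real.log (wid a b φ) := by
  have hr := wid_pos ha hb φ
  have hπ := Real.pi_pos
  set s := x.1 * Real.cos φ + x.2 * Real.sin φ with hs
  have h := integral_ellipse ha hb φ
    (F := fun t => (s - t) ^ 2 / wid a b φ ^ 2 - Real.log (s - t)) (by fun_prop)
  have e1 : ∀ y : ℝ × ℝ, dirKer a b φ (x - y) =
      (s - (y.1 * Real.cos φ + y.2 * Real.sin φ)) ^ 2 / wid a b φ ^ 2 -
        Real.log (s - (y.1 * Real.cos φ + y.2 * Real.sin φ)) := by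
    intro y
    unfold dirKer
    have : (x - y).1 * Real.cos φ + (x - y).2 * Real.sin φ =
        s - (y.1 * Real.cos φ + y.2 * Real.sin φ) := by
      simp only [hs, Prod.fst_sub, Prod.snd_sub]; ring
    rw [this]
  simp_rw [e1]
  rw [h]
  set r := wid a b φ
  have e2 : ∫ α in 0..π, 2 * a * b * Real.sin α ^ 2 *
        ((s - r * Real.cos α) ^ 2 / r ^ 2 - Real.log (s - r * Real.cos α)) =
      ∫ α in 0..π, (2 * a * b * (Real.sin α ^ 2 * ((s / r - Real.cos α) ^ 2 -
        Real.log (s / r - Real.cos α))) - 2 * a * b * Real.log r * Real.sin α ^ 2) := by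
    apply intervalIntegral.integral_congr_ae
    filter_upwards [ae_sub_cos_ne_zero (s / r)] with α hα _
    have h1 : s - r * Real.cos α = r * (s / r - Real.cos α) := by field_simp
    rw [h1, Real.log_mul hr.ne' hα, mul_pow]
    field_simp
    ring
  have i1 : IntervalIntegrable (fun α => Real.sin α ^ 2 * ((s / r - Real.cos α) ^ 2 -
      Real.log (s / r - Real.cos α))) volume 0 π :=
    ((Continuous.intervalIntegrable (by fun_prop) _ _).sub
      (intervalIntegrable_log_sub_cos _ _ _)).continuousOn_mul
        (Continuous.continuousOn (by fun_prop))
  rw [e2, intervalIntegral.integral_sub (i1.const_mul _)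
    (Continuous.intervalIntegrable (by fun_prop) _ _), intervalIntegral.integral_const_mul,
    intervalIntegral.integral_const_mul, integral_sin_sq, semiPot]
  simp only [Real.sin_zero, Real.sin_pi, zero_mul, sub_zero, zero_add]
  field_simp

/-- The quadratic correction is the superposition of the squares `(v · e_φ)² / r_φ²`. -/
lemma quad_eq {Ω : ℝ → ℝ} (h : SatisfiesH Ω) {a b : ℝ} (ha : 0 < a) (hb : 0 < b) (v : ℝ × ℝ) :
    ALog Ω a b * v.1 ^ 2 + BLog Ω a b * v.2 ^ 2 + 2 * DLog Ω a b * v.1 * v.2 =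
      ∫ φ in (-π)..π, OmtLog Ω φ *
        ((v.1 * Real.cos φ + v.2 * Real.sin φ) ^ 2 / wid a b φ ^ 2) := by
  have hg := h.continuous_OmtLog
  have hne : ∀ φ, a ^ 2 * Real.cos φ ^ 2 + b ^ 2 * Real.sin φ ^ 2 ≠ 0 :=
    fun φ => (wid_sq_pos ha hb φ).ne'
  have e : ∀ φ, OmtLog Ω φ * ((v.1 * Real.cos φ + v.2 * Real.sin φ) ^ 2 / wid a b φ ^ 2) =
      ((a ^ 2 * Real.cos φ ^ 2 + b ^ 2 * Real.sin φ ^ 2)⁻¹ * Real.cos φ ^ 2 * OmtLog Ω φ) * v.1 ^ 2 +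
      ((a ^ 2 * Real.cos φ ^ 2 + b ^ 2 * Real.sin φ ^ 2)⁻¹ * Real.sin φ ^ 2 * OmtLog Ω φ) * v.2 ^ 2 +
      ((a ^ 2 * Real.cos φ ^ 2 + b ^ 2 * Real.sin φ ^ 2)⁻¹ * (Real.cos φ * Real.sin φ) *
        OmtLog Ω φ) * (2 * v.1 * v.2) := by
    intro φ
    rw [wid_sq ha hb]
    ring
  have hc : ∀ f : ℝ → ℝ, Continuous f → Continuous fun φ =>
      (a ^ 2 * Real.cos φ ^ 2 + b ^ 2 * Real.sin φ ^ 2)⁻¹ * f φ * OmtLog Ω φ := fun f hf =>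
    ((Continuous.inv₀ (by fun_prop) hne).mul hf).mul hg
  have c1 := hc (fun φ => Real.cos φ ^ 2) (by fun_prop)
  have c2 := hc (fun φ => Real.sin φ ^ 2) (by fun_prop)
  have c3 := hc (fun φ => Real.cos φ * Real.sin φ) (by fun_prop)
  simp_rw [e]
  rw [intervalIntegral.integral_add (Continuous.intervalIntegrable (by fun_prop) _ _)
    (Continuous.intervalIntegrable (by fun_prop) _ _),
    intervalIntegral.integral_add (Continuous.intervalIntegrable (by fun_prop) _ _)
    (Continuous.intervalIntegrable (by fun_prop) _ _), intervalIntegral.integral_mul_const,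
    intervalIntegral.integral_mul_const, intervalIntegral.integral_mul_const]
  unfold ALog BLog DLog
  ring

lemma ellipseSet_subset {a b : ℝ} (ha : 0 < a) (hb : 0 < b) :
    ellipseSet a b ⊆ Set.Icc (-a) a ×ˢ Set.Icc (-b) b := by
  intro y hy
  have h : y.1 ^ 2 / a ^ 2 + y.2 ^ 2 / b ^ 2 ≤ 1 := hy
  have h1 : 0 ≤ y.1 ^ 2 / a ^ 2 := by positivity
  have h2 : 0 ≤ y.2 ^ 2 / b ^ 2 := by positivity
  have h3 : y.1 ^ 2 / a ^ 2 ≤ 1 := by linarith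
  have h4 : y.2 ^ 2 / b ^ 2 ≤ 1 := by linarith
  rw [div_le_one (by positivity)] at h3 h4
  exact ⟨abs_le.1 (abs_le_of_sq_le_sq h3 ha.le), abs_le.1 (abs_le_of_sq_le_sq h4 hb.le)⟩

lemma ae_fst_ne (x : ℝ × ℝ) : ∀ᵐ y : ℝ × ℝ, (x - y).1 ≠ 0 := by
  have h1 : ∀ᵐ t : ℝ, t ≠ x.1 := by
    rw [ae_iff]; simp
  have h2 : ∀ᵐ y : ℝ × ℝ, y.1 ≠ x.1 := by
    rw [Measure.volume_eq_prod]
    exact Measure.quasiMeasurePreserving_fst.ae h1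
  filter_upwards [h2] with y hy
  rw [Prod.fst_sub]
  exact sub_ne_zero.2 hy.symm

lemma abs_fst_le_nrm (v : ℝ × ℝ) : |v.1| ≤ nrm v :=
  Real.abs_le_sqrt (by nlinarith [sq_nonneg v.2])

lemma abs_log_nrm_le {v : ℝ × ℝ} (hv : v.1 ≠ 0) :
    |Real.log (nrm v)| ≤ |Real.log v.1| + nrm v := by
  have h1 := abs_pos.2 hv
  have h2 := abs_fst_le_nrm v
  have hn : 0 < nrm v := h1.trans_le h2
  have h3 := Real.log_le_log h1 h2
  rw [Real.log_abs] at h3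
  have h4 := Real.log_le_sub_one_of_pos hn
  rw [abs_le]
  constructor
  · linarith [neg_abs_le (Real.log v.1)]
  · linarith [abs_nonneg (Real.log v.1)]

lemma integrable_log_nrm {a b : ℝ} (ha : 0 < a) (hb : 0 < b) (x : ℝ × ℝ) :
    IntegrableOn (fun y => Real.log (nrm (x - y))) (ellipseSet a b) := by
  have hn : Continuous nrm := by unfold nrm; fun_prop
  have hbox : IntegrableOn (fun y : ℝ × ℝ => |Real.log (x - y).1| + nrm (x - y))
      (Set.Icc (-a) a ×ˢ Set.Icc (-b) b) := by
    refine IntegrableOn.add ?_ ?_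
    · have h1 : IntegrableOn (fun t => |Real.log (x.1 - t)|) (Set.Icc (-a) a) := by
        have h := ((intervalIntegral.intervalIntegrable_log' (a := x.1 + a)
          (b := x.1 - a)).comp_sub_left x.1).abs
        rw [sub_add_cancel_left, sub_sub_cancel, intervalIntegrable_iff_integrableOn_Icc_of_le
          (by linarith)] at h
        exact h
      have hfin : IsFiniteMeasure (volume.restrict (Set.Icc (-b) b)) := ⟨by simp⟩
      have h2 : Integrable (fun p : ℝ × ℝ => |Real.log (x.1 - p.1)|)
          ((volume.restrict (Set.Icc (-a) a)).prod (volume.restrict (Set.Icc (-b) b))) :=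
        Integrable.comp_fst h1 _
      rw [Measure.prod_restrict, ← Measure.volume_eq_prod] at h2
      exact h2
    · exact (Continuous.continuousOn (by fun_prop)).integrableOn_compact
        (isCompact_Icc.prod isCompact_Icc)
  refine Integrable.mono' (hbox.mono_set (ellipseSet_subset ha hb)) ?_ ?_
  · have := hn.measurable
    exact Measurable.aestronglyMeasurable (by fun_prop)
  · filter_upwards [ae_restrict_of_ae (ae_fst_ne x)] with y hy
    exact abs_log_nrm_le hy

/-! ### Superposition over directions -/

lemma measurable_dirKer_prod (a b : ℝ) (x : ℝ × ℝ) {g : ℝ → ℝ} (hg : Continuous g) :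
    Measurable fun p : (ℝ × ℝ) × ℝ => g p.2 * dirKer a b p.2 (x - p.1) := by
  have h1 := hg.measurable
  have h2 := (continuous_wid a b).measurable
  unfold dirKer
  fun_prop

lemma intervalIntegrable_log_dot {v : ℝ × ℝ} (hv : v ≠ 0) (c d : ℝ) :
    IntervalIntegrable (fun φ => Real.log (v.1 * Real.cos φ + v.2 * Real.sin φ)) volume c d := by
  refine IntervalIntegrable.congr_ae ?_ (ae_restrict_of_ae
    ((log_dot_ae hv).mono fun φ h => h.symm))
  exact (by simp : IntervalIntegrable (fun _ : ℝ => Real.log (nrm v)) volume c d).add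
    (intervalIntegrable_log_cos_sub (ang v) c d)

/-- The logarithmic part of the directional kernels is bounded in `L¹(dφ)` by a multiple of
`1 + |log |v||`. -/
lemma exists_integral_abs_log_dot_le : ∃ K, ∀ v : ℝ × ℝ, v ≠ 0 →
    ∫ φ in Set.Ioc (-π) π, |Real.log (v.1 * Real.cos φ + v.2 * Real.sin φ)| ≤
      2 * π * |Real.log (nrm v)| + K := by
  have hπ := Real.pi_pos
  refine ⟨∫ φ in (-π)..π, |Real.log (Real.cos φ)|, fun v hv => ?_⟩
  have hper : Function.Periodic (fun φ => |Real.log (Real.cos φ)|) (2 * π) := fun φ => by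
    simp only [Real.cos_add_two_pi]
  have h1 := intervalIntegral.integral_comp_sub_right (a := -π) (b := π)
    (fun φ => |Real.log (Real.cos φ)|) (ang v)
  have h2 := hper.intervalIntegral_add_eq (-π - ang v) (-π)
  rw [show -π - ang v + 2 * π = π - ang v by ring, show -π + 2 * π = π by ring] at h2
  rw [← h2, ← h1, ← intervalIntegral.integral_of_le (by linarith)]
  have h3 : 2 * π * |Real.log (nrm v)| = ∫ _ in (-π)..π, |Real.log (nrm v)| := by
    rw [intervalIntegral.integral_const, smul_eq_mul]
    ring
  have i1 : IntervalIntegrable (fun _ : ℝ => |Real.log (nrm v)|) volume (-π) π := by simp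
  have i2 := (intervalIntegrable_log_cos_sub (ang v) (-π) π).abs
  rw [h3, ← intervalIntegral.integral_add i1 i2]
  refine intervalIntegral.integral_mono_ae (by linarith) (intervalIntegrable_log_dot hv _ _).abs
    (i1.add i2) ?_
  filter_upwards [log_dot_ae hv] with φ hφ
  rw [hφ]
  exact abs_add_le _ _

/-- Joint integrability of the weighted directional kernels over the ellipse and all directions. -/
lemma integrable_dirKer {a b : ℝ} (ha : 0 < a) (hb : 0 < b) (x : ℝ × ℝ) {g : ℝ → ℝ}
    (hg : Continuous g) {B : ℝ} (hB : ∀ φ, |g φ| ≤ B) :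
    Integrable (fun p : (ℝ × ℝ) × ℝ => g p.2 * dirKer a b p.2 (x - p.1))
      ((volume.restrict (ellipseSet a b)).prod (volume.restrict (Set.Ioc (-π) π))) := by
  have hπ := Real.pi_pos
  have hw := continuous_wid a b
  have hwn : ∀ φ, wid a b φ ^ 2 ≠ 0 := fun φ => (pow_pos (wid_pos ha hb φ) 2).ne'
  have hB0 : 0 ≤ B := (abs_nonneg _).trans (hB 0)
  have hfin : IsFiniteMeasure (volume.restrict (ellipseSet a b)) :=
    ⟨by rw [Measure.restrict_apply_univ, volume_ellipse ha hb]; exact ENNReal.ofReal_lt_top⟩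
  have hq : Integrable (fun p : (ℝ × ℝ) × ℝ => g p.2 * (((x - p.1).1 * Real.cos p.2 +
      (x - p.1).2 * Real.sin p.2) ^ 2 / wid a b p.2 ^ 2))
      ((volume.restrict (ellipseSet a b)).prod (volume.restrict (Set.Ioc (-π) π))) := by
    have hc : Continuous (fun p : (ℝ × ℝ) × ℝ => g p.2 * (((x - p.1).1 * Real.cos p.2 +
        (x - p.1).2 * Real.sin p.2) ^ 2 / wid a b p.2 ^ 2)) :=
      (by fun_prop : Continuous fun p : (ℝ × ℝ) × ℝ => g p.2).mul
        (Continuous.div (by fun_prop) (by fun_prop) fun p => hwn p.2)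
    have h1 := (hc.continuousOn (s := (Set.Icc (-a) a ×ˢ Set.Icc (-b) b) ×ˢ
      Set.Icc (-π) π)).integrableOn_compact (μ := volume)
        ((isCompact_Icc.prod isCompact_Icc).prod isCompact_Icc)
    rw [Measure.prod_restrict, ← Measure.volume_eq_prod]
    exact h1.mono_set (Set.prod_mono (ellipseSet_subset ha hb) Set.Ioc_subset_Icc_self)
  have hl : Integrable (fun p : (ℝ × ℝ) × ℝ => g p.2 * Real.log ((x - p.1).1 * Real.cos p.2 +
      (x - p.1).2 * Real.sin p.2))
      ((volume.restrict (ellipseSet a b)).prod (volume.restrict (Set.Ioc (-π) π))) := by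
    have hm : Measurable (fun p : (ℝ × ℝ) × ℝ => g p.2 * Real.log ((x - p.1).1 * Real.cos p.2 +
        (x - p.1).2 * Real.sin p.2)) := by
      have := hg.measurable
      fun_prop
    have hne : ∀ᵐ y ∂(volume.restrict (ellipseSet a b)), x - y ≠ 0 := by
      filter_upwards [ae_restrict_of_ae (ae_fst_ne x)] with y hy h0
      rw [h0] at hy
      exact hy rfl
    obtain ⟨K, hK⟩ := exists_integral_abs_log_dot_le
    have hi : ∀ v : ℝ × ℝ, v ≠ 0 → IntegrableOn
        (fun φ => Real.log (v.1 * Real.cos φ + v.2 * Real.sin φ)) (Set.Ioc (-π) π) := fun v hv =>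
      (intervalIntegrable_iff_integrableOn_Ioc_of_le (by linarith)).1
        (intervalIntegrable_log_dot hv _ _)
    rw [integrable_prod_iff hm.aestronglyMeasurable]
    constructor
    · filter_upwards [hne] with y hy
      exact (hi _ hy).bdd_mul hg.aestronglyMeasurable (Eventually.of_forall hB)
    · have hdom : Integrable (fun y => B * (2 * π * |Real.log (nrm (x - y))| + K))
          (volume.restrict (ellipseSet a b)) :=
        (((integrable_log_nrm ha hb x).abs.const_mul _).add (integrable_const K)).const_mul B
      refine hdom.mono' hm.norm.aestronglyMeasurable.integral_prod_right' ?_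
      filter_upwards [hne] with y hy
      rw [Real.norm_of_nonneg (integral_nonneg fun _ => norm_nonneg _)]
      refine le_trans ?_ (mul_le_mul_of_nonneg_left (hK _ hy) hB0)
      rw [← integral_const_mul]
      refine integral_mono_of_nonneg (Eventually.of_forall fun _ => norm_nonneg _)
        ((hi _ hy).abs.const_mul B) (Eventually.of_forall fun φ => ?_)
      simp only [norm_mul, Real.norm_eq_abs]
      exact mul_le_mul_of_nonneg_right (hB φ) (abs_nonneg _)
  refine (hq.sub hl).congr (Eventually.of_forall fun p => ?_)
  simp only [dirKer, Pi.sub_apply]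
  ring

/-- The potential is a superposition over `φ` of one-dimensional semicircle potentials. -/
lemma SatisfiesH.exists_potential_eq {Ω : ℝ → ℝ} (h : SatisfiesH Ω) {a b : ℝ} (ha : 0 < a)
    (hb : 0 < b) : ∃ m, ∀ x : ℝ × ℝ,
    IntervalIntegrable (fun φ => OmtLog Ω φ *
      (semiPot ((x.1 * Real.cos φ + x.2 * Real.sin φ) / wid a b φ) - Real.log (wid a b φ)))
      volume (-π) π ∧
    (∫ y : ℝ × ℝ, (-Real.log (nrm (x - y)) + Ω (ang (x - y)) +
        ALog Ω a b * (x.1 - y.1) ^ 2 + BLog Ω a b * (x.2 - y.2) ^ 2 +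
        2 * DLog Ω a b * (x.1 - y.1) * (x.2 - y.2)) *
        (ellipseSet a b).indicator (fun _ => (π * a * b)⁻¹) y) =
      m + ∫ φ in (-π)..π, OmtLog Ω φ *
        (semiPot ((x.1 * Real.cos φ + x.2 * Real.sin φ) / wid a b φ) - Real.log (wid a b φ)) := by
  obtain ⟨m, hm⟩ := h.exists_kernel_rep
  obtain ⟨B, hB⟩ := h.bounded_OmtLog
  have hg := h.continuous_OmtLog
  have hπ := Real.pi_pos
  have hle : -π ≤ π := by linarith
  have hc : 0 < π * a * b := by positivity
  have hwn : ∀ φ, wid a b φ ^ 2 ≠ 0 := fun φ => (pow_pos (wid_pos ha hb φ) 2).ne'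
  have hwc := continuous_wid a b
  have hfin : IsFiniteMeasure (volume.restrict (ellipseSet a b)) :=
    ⟨by rw [Measure.restrict_apply_univ, volume_ellipse ha hb]; exact ENNReal.ofReal_lt_top⟩
  refine ⟨m, fun x => ?_⟩
  have hI := integrable_dirKer ha hb x hg hB
  have hslice : ∀ φ, ∫ y in ellipseSet a b, OmtLog Ω φ * dirKer a b φ (x - y) =
      (π * a * b) * (OmtLog Ω φ * (semiPot ((x.1 * Real.cos φ + x.2 * Real.sin φ) / wid a b φ) -
        Real.log (wid a b φ))) := by
    intro φ
    rw [← integral_dirKer ha hb, integral_const_mul]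
    field_simp
  have hslice_int := hI.integral_prod_right
  simp only [hslice] at hslice_int
  constructor
  · rw [intervalIntegrable_iff_integrableOn_Ioc_of_le hle]
    refine (hslice_int.const_mul (π * a * b)⁻¹).congr (Eventually.of_forall fun φ => ?_)
    simp only
    field_simp
  have e1 : ∀ y : ℝ × ℝ, x - y ≠ 0 → -Real.log (nrm (x - y)) + Ω (ang (x - y)) +
        ALog Ω a b * (x.1 - y.1) ^ 2 + BLog Ω a b * (x.2 - y.2) ^ 2 +
        2 * DLog Ω a b * (x.1 - y.1) * (x.2 - y.2) =
      m + ∫ φ in Set.Ioc (-π) π, OmtLog Ω φ * dirKer a b φ (x - y) := by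
    intro y hy
    have h1 := hm _ hy
    have h2 := quad_eq h ha hb (x - y)
    have h3 : ∫ φ in (-π)..π, OmtLog Ω φ * dirKer a b φ (x - y) =
        (∫ φ in (-π)..π, OmtLog Ω φ * (((x - y).1 * Real.cos φ + (x - y).2 * Real.sin φ) ^ 2 /
          wid a b φ ^ 2)) - ∫ φ in (-π)..π, OmtLog Ω φ *
            Real.log ((x - y).1 * Real.cos φ + (x - y).2 * Real.sin φ) := by
      rw [← intervalIntegral.integral_sub]
      · simp only [dirKer, mul_sub]
      · exact (hg.mul (Continuous.div (by fun_prop) (by fun_prop) hwn)).intervalIntegrable _ _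
      · exact (intervalIntegrable_log_dot hy _ _).continuousOn_mul hg.continuousOn
    rw [← intervalIntegral.integral_of_le hle, h3]
    simp only [Prod.fst_sub, Prod.snd_sub] at h1 h2 ⊢
    linarith
  have e2 : (∫ y : ℝ × ℝ, (-Real.log (nrm (x - y)) + Ω (ang (x - y)) +
        ALog Ω a b * (x.1 - y.1) ^ 2 + BLog Ω a b * (x.2 - y.2) ^ 2 +
        2 * DLog Ω a b * (x.1 - y.1) * (x.2 - y.2)) *
        (ellipseSet a b).indicator (fun _ => (π * a * b)⁻¹) y) =
      ∫ y in ellipseSet a b, (m + ∫ φ in Set.Ioc (-π) π, OmtLog Ω φ * dirKer a b φ (x - y)) *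
        (π * a * b)⁻¹ := by
    rw [← integral_indicator (measurableSet_ellipseSet a b)]
    apply integral_congr_ae
    filter_upwards [ae_fst_ne x] with y hy
    have hy0 : x - y ≠ 0 := fun h0 => hy (by rw [h0]; rfl)
    rw [e1 y hy0]
    simp only [Set.indicator]
    split_ifs <;> simp
  rw [e2, integral_mul_const, integral_add (integrable_const m) hI.integral_prod_left,
    integral_integral_swap hI]
  simp only [hslice]
  rw [integral_const_mul, ← intervalIntegral.integral_of_le hle, setIntegral_const,
    measureReal_def, volume_ellipse ha hb, ENNReal.toReal_ofReal hc.le, smul_eq_mul]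
  field_simp

lemma abs_dot_le_wid {a b : ℝ} (ha : 0 < a) (hb : 0 < b) {x : ℝ × ℝ} (hx : x ∈ ellipseSet a b)
    (φ : ℝ) : |(x.1 * Real.cos φ + x.2 * Real.sin φ) / wid a b φ| ≤ 1 := by
  have hr := wid_pos ha hb φ
  rw [abs_div, abs_of_pos hr, div_le_one hr]
  refine Real.abs_le_sqrt ?_
  have h : x.1 ^ 2 / a ^ 2 + x.2 ^ 2 / b ^ 2 ≤ 1 := hx
  have hp := wid_sq_pos ha hb φ
  -- Cauchy–Schwarz for `(x₁ / a, x₂ / b)` and `(a cos φ, b sin φ)`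
  have h1 : (x.1 * Real.cos φ + x.2 * Real.sin φ) ^ 2 +
      (x.1 / a * (b * Real.sin φ) - x.2 / b * (a * Real.cos φ)) ^ 2 =
      (x.1 ^ 2 / a ^ 2 + x.2 ^ 2 / b ^ 2) *
        (a ^ 2 * Real.cos φ ^ 2 + b ^ 2 * Real.sin φ ^ 2) := by
    field_simp
    ring
  nlinarith [sq_nonneg (x.1 / a * (b * Real.sin φ) - x.2 / b * (a * Real.cos φ)),
    mul_le_mul_of_nonneg_right h hp.le]

/-- the logarithmic potential generated by the uniform probability measure
on the ellipse `B(0;a,b)`, corrected by the quadratic with coefficients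
`A, B, D` built from `Ω̃_log`, is constant on `B(0;a,b)`; if `Ω̃_log ≥ 0`, it attains its
global minimum there. -/
theorem statement15 (Ω : ℝ → ℝ) (hΩ : SatisfiesH Ω) (a b : ℝ) (ha : 0 < a) (hb : 0 < b) :
    ∃ C : ℝ,
      (∀ x ∈ ellipseSet a b,
        (∫ y : ℝ × ℝ,
          (-Real.log (nrm (x - y)) + Ω (ang (x - y)) +
            ALog Ω a b * (x.1 - y.1) ^ 2 + BLog Ω a b * (x.2 - y.2) ^ 2 +
            2 * DLog Ω a b * (x.1 - y.1) * (x.2 - y.2)) *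
            (ellipseSet a b).indicator (fun _ => (π * a * b)⁻¹) y) = C) ∧
      ((∀ φ, 0 ≤ OmtLog Ω φ) → ∀ x : ℝ × ℝ,
        C ≤ ∫ y : ℝ × ℝ,
          (-Real.log (nrm (x - y)) + Ω (ang (x - y)) +
            ALog Ω a b * (x.1 - y.1) ^ 2 + BLog Ω a b * (x.2 - y.2) ^ 2 +
            2 * DLog Ω a b * (x.1 - y.1) * (x.2 - y.2)) *
            (ellipseSet a b).indicator (fun _ => (π * a * b)⁻¹) y) := by
  obtain ⟨m, hm⟩ := hΩ.exists_potential_eq ha hb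
  refine ⟨m + ∫ φ in (-π)..π, OmtLog Ω φ * (3 / 4 + Real.log 2 - Real.log (wid a b φ)), ?_, ?_⟩
  · intro x hx
    rw [(hm x).2]
    simp only [semiPot_of_abs_le (abs_dot_le_wid ha hb hx _)]
  · intro hpos x
    rw [(hm x).2]
    have hlog : Continuous fun φ => Real.log (wid a b φ) :=
      (continuous_wid a b).log fun φ => (wid_pos ha hb φ).ne'
    have hg := hΩ.continuous_OmtLog
    gcongr
    refine intervalIntegral.integral_mono (by linarith [Real.pi_pos])
      (Continuous.intervalIntegrable (by fun_prop) _ _) (hm x).1 fun φ => ?_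
    exact mul_le_mul_of_nonneg_left (sub_le_sub_right (le_semiPot _) _) (hpos φ)

end Aniso
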